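/- arXiv:1912.05775 — 2 statements merged into one kernel-verified Lean document; each statement's English description precedes it below -/
import Mathlib

section
/- Let n ≥ 2 and let G = S_n(a_1, a_2, …, a_n) be a palm with 1 ≤ a_1 ≤ a_2 ≤ ⋯ ≤ a_n. If a_3 ≥ 2 and, for every nonnegative integer k ≤ log_3(n/4), a_{4·3^k + 1} ≥ 2k + 3 and a_{8·3^k + 1} ≥ 2k + 4, then χ_L(G) = ⌈log_3(n/4)⌉ + 3. -/
open SimpleGraph

/-- Distance from a vertex to a set of vertices, `d(u,S) = min {d(u,v) : v ∈ S}`. -/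
noncomputable def distToSet {V : Type*} (G : SimpleGraph V) (u : V) (S : Set V) : ℕ :=
  sInf (G.dist u '' S)

/-- `c` is a locating coloring of `G` with `k` colors: a proper coloring such that any two
distinct vertices are resolved by some color class. -/
def IsLocatingColoring {V : Type*} (G : SimpleGraph V) {k : ℕ} (c : V → Fin k) : Prop :=
  (∀ u v : V, G.Adj u v → c u ≠ c v) ∧
  ∀ u v : V, u ≠ v →
    ∃ i : Fin k, distToSet G u (c ⁻¹' {i}) ≠ distToSet G v (c ⁻¹' {i})

/-- The locating chromatic number `χ_L(G)`: the least `k` admitting a locating `k`-coloring. -/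
noncomputable def locatingChromaticNumber {V : Type*} (G : SimpleGraph V) : ℕ :=
  sInf {k : ℕ | ∃ c : V → Fin k, IsLocatingColoring G c}

/-- The vertex set of the palm `S_n(a_1, …, a_n)`: a hub `none` and, for each leg
`i : Fin n` (representing leg `i+1`), vertices `j : Fin (a (i+1))`
(vertex `some ⟨i, j⟩` represents `a_{i+1, j+1}`). -/
def PalmVert (n : ℕ) (a : ℕ → ℕ) : Type :=
  Option ((i : Fin n) × Fin (a ((i : ℕ) + 1)))

/-- The palm `S_n(a_1, …, a_n)`: the star `K_{1,n}` whose `i`-th edge has been subdivided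
`a_i - 1` times; the hub is joined to the first vertex of each leg, and consecutive
vertices along a leg are adjacent. -/
def Palm (n : ℕ) (a : ℕ → ℕ) : SimpleGraph (PalmVert n a) :=
  SimpleGraph.fromRel fun u v =>
    match u, v with
    | none, some ⟨_, j⟩ => (j : ℕ) = 0
    | some ⟨i, j⟩, some ⟨i', j'⟩ => (i : ℕ) = (i' : ℕ) ∧ (j' : ℕ) = (j : ℕ) + 1
    | _, _ => False

/-!
A coloring is locating when the color codes, the vectors of distances to the `m` color classes,
are distinct.

For the lower bound, look at the `n` neighbors of the hub. The color code of such a neighbor is `0`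
at its own color, `1` at the color of the hub, `1` or `2` at any other color that occurs around the
hub, and one of three consecutive numbers at each remaining color. If `w + 1` colors occur around
the hub, this leaves room for `(w + 1) * 2 ^ w * 3 ^ (m - w - 2) ≤ 4 * 3 ^ (m - 3)` neighbors.

For the upper bound, number the legs from `0` and let leg `i` alternate between two of the colors
`0, 1, 2`, depending on `i % 4`. The `j`-th base three digit of `i / 4` is stored by a single
vertex of color `3 + j`: at position `2 * j + 3` for the digit `1`, at position `2 * j + 4` for the
digit `2`, and nowhere for the digit `0`. At a vertex of position `p`, the color that its leg lacks
among `0, 1, 2` is at distance `p` for the color `0` of the hub and `p + 1` otherwise, while the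
other two are within `p`; together with the parity of the distance to color `1`, which separates
the two kinds of legs without color `0`, this recovers `p` and `i % 4`. The distance to color
`3 + j` is at least `p + 2 * j + 3` if leg `i` lacks this color and smaller otherwise, with parity
given by the digit, so it recovers the digit. By monotonicity, the long legs in the hypothesis are
the shortest ones on which a given nonzero digit can occur.
-/

section DistToSet

variable {V : Type*} {G : SimpleGraph V} {S : Set V} {u v : V}

theorem distToSet_le_dist (hv : v ∈ S) : distToSet G u S ≤ G.dist u v :=
  Nat.sInf_le ⟨v, hv, rfl⟩

theorem exists_dist_eq_distToSet (hS : S.Nonempty) (u : V) :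
    ∃ v ∈ S, G.dist u v = distToSet G u S :=
  Nat.sInf_mem (hS.image (G.dist u))

theorem distToSet_eq_zero_of_mem (hu : u ∈ S) : distToSet G u S = 0 := by
  simpa using distToSet_le_dist (G := G) (u := u) hu

theorem distToSet_pos (hG : G.Connected) (hS : S.Nonempty) (hu : u ∉ S) :
    0 < distToSet G u S := by
  obtain ⟨v, hv, h⟩ := exists_dist_eq_distToSet (G := G) hS u
  exact h ▸ hG.pos_dist_of_ne (ne_of_mem_of_not_mem hv hu).symm

theorem distToSet_le_dist_add_distToSet (hG : G.Connected) (u v : V) (S : Set V) :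
    distToSet G u S ≤ G.dist u v + distToSet G v S := by
  rcases S.eq_empty_or_nonempty with rfl | hS
  · simp [distToSet]
  · obtain ⟨w, hw, h⟩ := exists_dist_eq_distToSet (G := G) hS v
    exact h ▸ (distToSet_le_dist hw).trans hG.dist_triangle

end DistToSet

section ColorCode

variable {V α : Type*} {G : SimpleGraph V}

/-- The color code of a vertex with respect to a coloring `c`: its distances to the color
classes. A proper coloring is locating exactly when the color codes are distinct. -/
noncomputable def colorCode (G : SimpleGraph V) (c : V → α) (v : V) (i : α) : ℕ :=
  distToSet G v (c ⁻¹' {i})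

theorem colorCode_le_dist {c : V → α} {v : V} {i : α} (hv : c v = i) (u : V) :
    colorCode G c u i ≤ G.dist u v :=
  distToSet_le_dist (S := c ⁻¹' {i}) hv

theorem exists_dist_eq_colorCode {c : V → α} {w : V} {i : α} (hw : c w = i) (u : V) :
    ∃ v, c v = i ∧ G.dist u v = colorCode G c u i :=
  exists_dist_eq_distToSet (S := c ⁻¹' {i}) ⟨w, hw⟩ u

theorem colorCode_self (c : V → α) (v : V) : colorCode G c v (c v) = 0 :=
  distToSet_eq_zero_of_mem rfl

theorem colorCode_pos (hG : G.Connected) {c : V → α} {u v : V} (h : c u ≠ c v) :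
    0 < colorCode G c u (c v) :=
  distToSet_pos hG ⟨v, rfl⟩ h

theorem colorCode_le_add_one_of_adj (hG : G.Connected) (c : V → α) {u v : V} (h : G.Adj u v)
    (i : α) : colorCode G c u i ≤ colorCode G c v i + 1 := by
  have := distToSet_le_dist_add_distToSet hG u v (c ⁻¹' {i})
  rwa [dist_eq_one_iff_adj.2 h, add_comm] at this

theorem colorCode_eq_one_of_adj (hG : G.Connected) {c : V → α} {u v : V} (h : G.Adj u v)
    (hc : c u ≠ c v) : colorCode G c u (c v) = 1 := by
  have hle := colorCode_le_add_one_of_adj hG c h (c v)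
  rw [colorCode_self] at hle
  exact hle.antisymm (colorCode_pos hG hc)

theorem IsLocatingColoring.colorCode_injective {k : ℕ} {c : V → Fin k}
    (hc : IsLocatingColoring G c) : Function.Injective (colorCode G c) := by
  intro u v h
  by_contra hne
  obtain ⟨i, hi⟩ := hc.2 u v hne
  exact hi (congrFun h i)

theorem isLocatingColoring_of_nat {k : ℕ} {c : V → ℕ} (hlt : ∀ v, c v < k)
    (hadj : ∀ u v, G.Adj u v → c u ≠ c v)
    (hcode : ∀ u v, (∀ t < k, colorCode G c u t = colorCode G c v t) → u = v) :
    IsLocatingColoring G fun v => (⟨c v, hlt v⟩ : Fin k) := by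
  refine ⟨fun u v h e => hadj u v h (Fin.mk.inj e), fun u v hne => ?_⟩
  by_contra! h
  refine hne (hcode u v fun t ht => ?_)
  simpa [colorCode, Set.preimage, Fin.ext_iff] using h ⟨t, ht⟩

end ColorCode

section DegreeBound

variable {V : Type*} {G : SimpleGraph V} {m : ℕ} {c : V → Fin m} {x : V}

/-- Candidate entries at the color `t` for the color code of a neighbor of `x` of color `i`,
where `B` consists of further colors that occur around `x`. -/
noncomputable def neighborCodeRange (G : SimpleGraph V) (c : V → Fin m) (x : V) (i : Fin m)
    (B : Finset (Fin m)) (t : Fin m) : Finset ℕ :=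
  if t = c x then {1} else if t = i then {0} else if t ∈ B then {1, 2}
    else Finset.Icc (colorCode G c x t - 1) (colorCode G c x t + 1)

theorem IsLocatingColoring.colorCode_mem_neighborCodeRange (hG : G.Connected)
    (hc : IsLocatingColoring G c) {y : V} (hxy : G.Adj x y) {B : Finset (Fin m)}
    (hB : ∀ t ∈ B, ∃ z, G.Adj x z ∧ c z = t) (t : Fin m) :
    colorCode G c y t ∈ neighborCodeRange G c x (c y) B t := by
  unfold neighborCodeRange
  split_ifs with hx hy ht
  · rw [hx, Finset.mem_singleton]
    exact colorCode_eq_one_of_adj hG hxy.symm (hc.1 _ _ hxy.symm)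
  · rw [hy, Finset.mem_singleton, colorCode_self]
  · obtain ⟨z, hxz, rfl⟩ := hB t ht
    have hpos := colorCode_pos hG (Ne.symm hy)
    have hle := colorCode_le_add_one_of_adj hG c hxy.symm (c z)
    rw [colorCode_eq_one_of_adj hG hxz (hc.1 _ _ hxz)] at hle
    rw [Finset.mem_insert, Finset.mem_singleton]
    omega
  · have h₁ := colorCode_le_add_one_of_adj hG c hxy t
    have h₂ := colorCode_le_add_one_of_adj hG c hxy.symm t
    rw [Finset.mem_Icc]
    omega

theorem prod_card_neighborCodeRange_mul_le {i : Fin m} (hi : i ≠ c x) {B : Finset (Fin m)}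
    (hiB : i ∉ B) (hxB : c x ∉ B) :
    (∏ t, (neighborCodeRange G c x i B t).card) * 3 ^ (B.card + 2) ≤ 3 ^ m * 2 ^ B.card := by
  set C := insert (c x) (insert i B) with hC
  have hCcard : C.card = B.card + 2 := by
    rw [hC, Finset.card_insert_of_notMem (by simp [hi.symm, hxB]),
      Finset.card_insert_of_notMem hiB]
  have hCprod : ∏ t, (if t ∈ C then 3 else 1) = 3 ^ (B.card + 2) := by
    rw [Finset.prod_ite_mem, Finset.univ_inter, Finset.prod_const, hCcard]
  have hBprod : ∏ t : Fin m, 3 * (if t ∈ B then 2 else 1) = 3 ^ m * 2 ^ B.card := by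
    rw [Finset.prod_mul_distrib, Finset.prod_ite_mem, Finset.univ_inter, Finset.prod_const,
      Finset.prod_const, Finset.card_fin]
  rw [← hCprod, ← hBprod, ← Finset.prod_mul_distrib]
  refine Finset.prod_le_prod' fun t _ => ?_
  by_cases htx : t = c x
  · simp [neighborCodeRange, hC, htx, hxB]
  by_cases hti : t = i
  · simp [neighborCodeRange, hC, hti, hi, hiB]
  by_cases htB : t ∈ B
  · simp [neighborCodeRange, hC, htx, hti, htB]
  · simp only [neighborCodeRange, hC, htx, hti, htB, Finset.mem_insert, if_false, or_self,
      Nat.card_Icc]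
    omega

theorem IsLocatingColoring.card_monochromatic_neighbors_mul_three_pow_le (hG : G.Connected)
    (hc : IsLocatingColoring G c) {i : Fin m} {s : Finset V}
    (hs : ∀ y ∈ s, G.Adj x y ∧ c y = i) {B : Finset (Fin m)} (hiB : i ∉ B)
    (hB : ∀ t ∈ B, ∃ z, G.Adj x z ∧ c z = t) :
    s.card * 3 ^ (B.card + 2) ≤ 3 ^ m * 2 ^ B.card := by
  rcases s.eq_empty_or_nonempty with rfl | ⟨y, hy⟩
  · simp
  have hi : i ≠ c x := (hs y hy).2 ▸ (hc.1 _ _ (hs y hy).1).symm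
  have hxB : c x ∉ B := fun h => by
    obtain ⟨z, hz, e⟩ := hB _ h
    exact hc.1 _ _ hz e.symm
  have hcard : s.card ≤ ∏ t, (neighborCodeRange G c x i B t).card := by
    rw [← Fintype.card_piFinset]
    refine Finset.card_le_card_of_injOn (colorCode G c) (fun z hz => ?_)
      hc.colorCode_injective.injOn
    obtain ⟨hxz, rfl⟩ := hs z hz
    simpa using hc.colorCode_mem_neighborCodeRange hG hxz hB
  exact (Nat.mul_le_mul_right _ hcard).trans (prod_card_neighborCodeRange_mul_le hi hiB hxB)

theorem three_mul_add_one_mul_two_pow_le (w : ℕ) : 3 * ((w + 1) * 2 ^ w) ≤ 4 * 3 ^ w := by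
  rcases Nat.eq_zero_or_pos w with rfl | hw
  · norm_num
  induction w, hw using Nat.le_induction with
  | base => norm_num
  | succ w hw ih =>
    calc 3 * ((w + 1 + 1) * 2 ^ (w + 1)) = 3 * 2 ^ w * (2 * (w + 2)) := by ring
      _ ≤ 3 * 2 ^ w * (3 * (w + 1)) := Nat.mul_le_mul_left _ (by omega)
      _ = 3 * (3 * ((w + 1) * 2 ^ w)) := by ring
      _ ≤ 3 * (4 * 3 ^ w) := by gcongr
      _ = 4 * 3 ^ (w + 1) := by ring

/-- If `w + 1` colors occur on `s`, each of them occurs at most `2 ^ w * 3 ^ (m - w - 2)` times,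
and `(w + 1) * (2 / 3) ^ w` is at most `4 / 3`, with equality at `w = 1` and `w = 2`. -/
theorem IsLocatingColoring.mul_card_neighbors_le (hG : G.Connected) (hc : IsLocatingColoring G c)
    {s : Finset V} (hs : ∀ y ∈ s, G.Adj x y) : 27 * s.card ≤ 4 * 3 ^ m := by
  rcases s.eq_empty_or_nonempty with rfl | hne
  · simp
  obtain ⟨w, hw⟩ := Nat.exists_eq_add_one.2 (hne.image c).card_pos
  have hfiber (i) (hi : i ∈ s.image c) :
      {y ∈ s | c y = i}.card * 3 ^ (w + 2) ≤ 3 ^ m * 2 ^ w := by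
    have hcard : ((s.image c).erase i).card = w := by rw [Finset.card_erase_of_mem hi, hw]; rfl
    rw [← hcard]
    refine hc.card_monochromatic_neighbors_mul_three_pow_le hG (x := x) (i := i)
      (fun y hy => ?_) (Finset.notMem_erase i _) fun t ht => ?_
    · rw [Finset.mem_filter] at hy
      exact ⟨hs y hy.1, hy.2⟩
    · obtain ⟨z, hz, rfl⟩ := Finset.mem_image.1 (Finset.mem_of_mem_erase ht)
      exact ⟨z, hs z hz, rfl⟩
  have hsum : s.card * 3 ^ (w + 2) ≤ (w + 1) * (3 ^ m * 2 ^ w) := by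
    rw [Finset.card_eq_sum_card_image c s, Finset.sum_mul, ← hw, ← smul_eq_mul]
    exact Finset.sum_le_card_nsmul _ _ _ hfiber
  refine Nat.le_of_mul_le_mul_right ?_ (show 0 < 3 ^ w by positivity)
  calc 27 * s.card * 3 ^ w = 3 * (s.card * 3 ^ (w + 2)) := by ring
    _ ≤ 3 * ((w + 1) * (3 ^ m * 2 ^ w)) := by gcongr
    _ = 3 ^ m * (3 * ((w + 1) * 2 ^ w)) := by ring
    _ ≤ 3 ^ m * (4 * 3 ^ w) := Nat.mul_le_mul_left _ (three_mul_add_one_mul_two_pow_le w)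
    _ = 4 * 3 ^ m * 3 ^ w := by ring

end DegreeBound

section Distance

variable {V : Type*} {G : SimpleGraph V} {f : V → ℕ}

theorem le_add_length_of_walk (hadj : ∀ v w, G.Adj v w → f w ≤ f v + 1) {u v : V}
    (p : G.Walk u v) : f v ≤ f u + p.length := by
  induction p with
  | nil => simp
  | cons h p ih =>
    have := hadj _ _ h
    rw [Walk.length_cons]
    omega

theorem exists_walk_length_eq_of_descent {u : V}
    (hdesc : ∀ v, v ≠ u → ∃ w, G.Adj w v ∧ f w + 1 = f v) (hu : f u = 0) (v : V) :
    ∃ p : G.Walk u v, p.length = f v := by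
  induction h : f v generalizing v with
  | zero =>
    obtain rfl : v = u := by
      by_contra hne
      obtain ⟨w, -, hw⟩ := hdesc v hne
      omega
    exact ⟨.nil, rfl⟩
  | succ N ih =>
    obtain ⟨w, hwv, hw⟩ := hdesc v fun e => by subst e; omega
    obtain ⟨p, hp⟩ := ih w (by omega)
    exact ⟨p.concat hwv, by rw [Walk.length_concat, hp]⟩

theorem dist_eq_of_descent {u : V} (hu : f u = 0)
    (hadj : ∀ v w, G.Adj v w → f w ≤ f v + 1)
    (hdesc : ∀ v, v ≠ u → ∃ w, G.Adj w v ∧ f w + 1 = f v) (v : V) : G.dist u v = f v := by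
  obtain ⟨p, hp⟩ := exists_walk_length_eq_of_descent hdesc hu v
  obtain ⟨q, hq⟩ := p.reachable.exists_walk_length_eq_dist
  have := le_add_length_of_walk hadj q
  exact (hp ▸ dist_le p).antisymm (by omega)

end Distance

namespace PalmVert

variable {n : ℕ} {a : ℕ → ℕ} {u v w : PalmVert n a}

/-- The index, counted from `0`, of the leg containing a vertex. The hub, which lies on no leg,
gets the index `0`. -/
def leg : PalmVert n a → ℕ
  | none => 0
  | some ⟨i, _⟩ => i

/-- The distance from a vertex to the hub: `a_{i,j}` has position `j`. -/
def pos : PalmVert n a → ℕ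
  | none => 0
  | some ⟨_, j⟩ => j + 1

/-- The vertex `a_0` of a palm, in which all legs meet. -/
def hub : PalmVert n a := none

/-- `u` is the neighbor of `v` on the way to the hub. -/
def IsParent (u v : PalmVert n a) : Prop :=
  u.pos + 1 = v.pos ∧ (u.pos = 0 ∨ u.leg = v.leg)

theorem pos_hub : (hub : PalmVert n a).pos = 0 := rfl

theorem exists_leg_eq_pos_eq {i p : ℕ} (hi : i < n) (hp : 0 < p) (hpa : p ≤ a (i + 1)) :
    ∃ v : PalmVert n a, v.leg = i ∧ v.pos = p :=
  ⟨some ⟨⟨i, hi⟩, ⟨p - 1, by simp only; omega⟩⟩, rfl, Nat.sub_add_cancel hp⟩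

theorem leg_lt (h : 0 < v.pos) : v.leg < n := by
  rcases v with _ | ⟨i, j⟩
  · exact absurd h (lt_irrefl 0)
  · exact i.2

theorem pos_le (h : 0 < v.pos) : v.pos ≤ a (v.leg + 1) := by
  rcases v with _ | ⟨i, j⟩
  · exact absurd h (lt_irrefl 0)
  · exact j.2

theorem eq_hub_of_pos_eq_zero (h : v.pos = 0) : v = hub := by
  rcases v with _ | ⟨i, j⟩
  · rfl
  · exact absurd h (Nat.succ_ne_zero _)

theorem ext_leg_pos (hl : u.leg = v.leg) (hp : u.pos = v.pos) : u = v := by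
  rcases u with _ | ⟨⟨i, hi⟩, ⟨j, hj⟩⟩ <;> rcases v with _ | ⟨⟨i', hi'⟩, ⟨j', hj'⟩⟩
  · rfl
  · exact absurd hp (Nat.succ_ne_zero _).symm
  · exact absurd hp (Nat.succ_ne_zero _)
  · simp only [leg, pos, Nat.add_right_cancel_iff] at hl hp
    subst hl hp
    rfl

theorem IsParent.ne (h : IsParent u v) : u ≠ v := by
  rintro rfl
  exact Nat.succ_ne_self _ h.1

theorem palm_eq_fromRel_isParent : Palm n a = SimpleGraph.fromRel IsParent := by
  refine congrArg SimpleGraph.fromRel (funext₂ fun u v => propext ?_)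
  rcases u with _ | ⟨i, j⟩ <;> rcases v with _ | ⟨i', j'⟩ <;>
    simp only [IsParent, leg, pos, true_or, and_true, false_iff] <;> omega

theorem adj_iff : (Palm n a).Adj u v ↔ IsParent u v ∨ IsParent v u := by
  rw [palm_eq_fromRel_isParent, SimpleGraph.fromRel_adj, and_iff_right_iff_imp]
  rintro (h | h)
  exacts [h.ne, h.ne.symm]

theorem exists_isParent (h : 0 < v.pos) : ∃ w, IsParent w v := by
  rcases eq_or_ne v.pos 1 with h₁ | h₁
  · exact ⟨hub, by rw [h₁, pos_hub], .inl pos_hub⟩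
  · obtain ⟨w, hwl, hwp⟩ := exists_leg_eq_pos_eq (a := a) (p := v.pos - 1) (leg_lt h) (by omega)
      ((Nat.sub_le _ _).trans (pos_le h))
    exact ⟨w, by omega, .inr hwl⟩

theorem exists_isParent_of_pos_lt (h : u.pos < v.pos) (hl : u.pos = 0 ∨ u.leg = v.leg) :
    ∃ w, IsParent u w ∧ w.leg = v.leg := by
  have hv : 0 < v.pos := by omega
  obtain ⟨w, hwl, hwp⟩ := exists_leg_eq_pos_eq (leg_lt hv) u.pos.succ_pos (h.trans_le (pos_le hv))
  exact ⟨w, ⟨hwp.symm, hwl ▸ hl⟩, hwl⟩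

/-- The distance between two vertices, computed from their legs and positions. -/
def coordDist (u v : PalmVert n a) : ℕ :=
  if u.leg = v.leg then Nat.dist u.pos v.pos else u.pos + v.pos

theorem exists_adj_coordDist_add_one_eq (h : v ≠ u) :
    ∃ w, (Palm n a).Adj w v ∧ coordDist u w + 1 = coordDist u v := by
  by_cases hup : v.pos < u.pos ∧ (v.pos = 0 ∨ v.leg = u.leg)
  · obtain ⟨w, hw, hwl⟩ := exists_isParent_of_pos_lt hup.1 hup.2
    refine ⟨w, adj_iff.2 (.inr hw), ?_⟩
    have := hw.1
    simp only [coordDist, Nat.dist]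
    split_ifs <;> omega
  · have hext : v.leg = u.leg → v.pos ≠ u.pos := fun hl hp => h (ext_leg_pos hl hp)
    have hpos : 0 < v.pos := by
      by_contra hv
      have hu : u.pos = 0 := by omega
      exact h ((eq_hub_of_pos_eq_zero (by omega)).trans (eq_hub_of_pos_eq_zero hu).symm)
    obtain ⟨w, hw⟩ := exists_isParent hpos
    refine ⟨w, adj_iff.2 (.inl hw), ?_⟩
    obtain ⟨hwp, hwl⟩ := hw
    simp only [coordDist, Nat.dist]
    split_ifs <;> omega

theorem coordDist_le_add_one_of_adj (h : (Palm n a).Adj v w) :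
    coordDist u w ≤ coordDist u v + 1 := by
  simp only [adj_iff, IsParent] at h
  simp only [coordDist, Nat.dist]
  split_ifs <;> omega

theorem dist_eq_coordDist (u v : PalmVert n a) : (Palm n a).dist u v = coordDist u v :=
  dist_eq_of_descent (by simp [coordDist]) (fun _ _ => coordDist_le_add_one_of_adj)
    (fun _ => exists_adj_coordDist_add_one_eq) v

theorem connected : (Palm n a).Connected where
  preconnected u v :=
    (exists_walk_length_eq_of_descent (f := coordDist u)
      (fun _ => exists_adj_coordDist_add_one_eq) (by simp [coordDist]) v).choose.reachable
  nonempty := ⟨hub⟩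

theorem dist_eq_of_leg_eq (h : u.leg = v.leg) : (Palm n a).dist u v = Nat.dist u.pos v.pos :=
  (dist_eq_coordDist u v).trans (if_pos h)

theorem dist_eq_pos_add_pos (h : u.leg = v.leg → v.pos = 0) :
    (Palm n a).dist u v = u.pos + v.pos := by
  rw [dist_eq_coordDist, coordDist]
  split_ifs with hl
  · rw [h hl, Nat.dist_zero_right, add_zero]
  · rfl

theorem dist_le_pos_add_pos (u v : PalmVert n a) : (Palm n a).dist u v ≤ u.pos + v.pos := by
  rw [dist_eq_coordDist, coordDist, Nat.dist]
  split_ifs <;> omega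

theorem colorCode_le_pos_add_pos {α : Type*} {c : PalmVert n a → α} {i : α} (hv : c v = i)
    (u : PalmVert n a) : colorCode (Palm n a) c u i ≤ u.pos + v.pos :=
  (colorCode_le_dist hv u).trans (dist_le_pos_add_pos u v)

theorem pos_add_le_colorCode {α : Type*} {c : PalmVert n a → α} {i : α} (hw : c w = i) {q : ℕ}
    (hleg : ∀ v, c v = i → u.leg = v.leg → v.pos = 0) (hq : ∀ v, c v = i → q ≤ v.pos) :
    u.pos + q ≤ colorCode (Palm n a) c u i := by
  obtain ⟨v, hv, h⟩ := exists_dist_eq_colorCode (G := Palm n a) hw u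
  rw [← h, dist_eq_pos_add_pos (hleg v hv)]
  exact Nat.add_le_add_left (hq v hv) _

end PalmVert

section PalmColor

/-- The `j`-th base three digit of `i / 4`. -/
def legDigit (i j : ℕ) : ℕ := i / 4 / 3 ^ j % 3

/-- The color from `{0, 1, 2}` that a leg of type `r < 4` has by default at position `p > 0`. From
position `1` on, the legs of types `0, 1, 2, 3` alternate between the colors `1, 0`, between
`2, 0`, between `1, 2`, and between `2, 1`. -/
def baseColor (r p : ℕ) : ℕ :=
  if p % 2 = 1 then 1 + r % 2 else if r < 2 then 0 else 2 - r % 2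

/-- A coloring of palms, where `i` is a leg, counted from `0`, and `p` a position: the hub has
color `0` and leg `i` is colored as a leg of type `i % 4`, except that color `3 + j` is used at
position `2 * j + 3` or `2 * j + 4` if the `j`-th base three digit of `i / 4` is `1` or `2`. -/
def palmColor (i p : ℕ) : ℕ :=
  if p = 0 then 0
  else if 3 ≤ p ∧ legDigit i ((p - 3) / 2) = 1 + (p - 3) % 2 then 3 + (p - 3) / 2
  else baseColor (i % 4) p

theorem legDigit_lt (i j : ℕ) : legDigit i j < 3 := Nat.mod_lt _ (by norm_num)

theorem legDigit_mul_three_pow_le (i j : ℕ) : legDigit i j * 3 ^ j ≤ i / 4 :=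
  (Nat.le_div_iff_mul_le (by positivity)).1 (Nat.mod_le _ _)

theorem legDigit_eq_zero_of_lt {i j : ℕ} (h : i / 4 < 3 ^ j) : legDigit i j = 0 := by
  rw [legDigit, Nat.div_eq_of_lt h, Nat.zero_mod]

theorem mod_pow_eq_mod_pow_of_digits_eq {b k x y : ℕ}
    (h : ∀ j < k, x / b ^ j % b = y / b ^ j % b) : x % b ^ k = y % b ^ k := by
  induction k with
  | zero => simp [Nat.mod_one]
  | succ k ih =>
    rw [Nat.mod_pow_succ, Nat.mod_pow_succ, ih fun j hj => h j (hj.trans k.lt_succ_self),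
      h k k.lt_succ_self]

theorem baseColor_lt (r p : ℕ) : baseColor r p < 3 := by
  unfold baseColor
  split_ifs <;> omega

theorem baseColor_ne_succ (r p : ℕ) : baseColor r p ≠ baseColor r (p + 1) := by
  unfold baseColor
  split_ifs <;> omega

theorem baseColor_ne_zero {r : ℕ} (hr : 2 ≤ r) (p : ℕ) : baseColor r p ≠ 0 := by
  unfold baseColor
  split_ifs <;> omega

theorem baseColor_ne_of_add_eq_two {r t : ℕ} (h : r + t = 2) (p : ℕ) :
    baseColor r p ≠ t := by
  unfold baseColor
  split_ifs <;> omega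

theorem baseColor_eq_one_iff {r : ℕ} (hr : 2 ≤ r) {p : ℕ} :
    baseColor r p = 1 ↔ p % 2 = (r + 1) % 2 := by
  unfold baseColor
  split_ifs <;> omega

theorem exists_baseColor_eq {r t : ℕ} (hr : r < 4) (ht : t = 1 ∨ t = 2) (h : r + t ≠ 2) :
    ∃ p, 0 < p ∧ (p = 1 ∨ 2 ≤ r ∧ p = 2) ∧ baseColor r p = t := by
  by_cases hodd : 1 + r % 2 = t
  · exact ⟨1, one_pos, .inl rfl, hodd⟩
  · refine ⟨2, two_pos, .inr ⟨by omega, rfl⟩, ?_⟩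
    rw [baseColor, if_neg (by norm_num), if_neg (by omega)]
    omega

theorem palmColor_zero (i : ℕ) : palmColor i 0 = 0 := rfl

theorem palmColor_of_pos_of_lt_three {i p : ℕ} (hp : 0 < p) (h : p < 3) :
    palmColor i p = baseColor (i % 4) p := by
  rw [palmColor, if_neg (by omega), if_neg (by omega)]

theorem palmColor_eq_baseColor_of_lt_three {i p : ℕ} (hp : 0 < p) (h : palmColor i p < 3) :
    palmColor i p = baseColor (i % 4) p := by
  unfold palmColor at h ⊢
  split_ifs at h ⊢ <;> omega

theorem palmColor_eq_three_add_iff {i p j : ℕ} :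
    palmColor i p = 3 + j ↔ legDigit i j ≠ 0 ∧ p = 2 * j + 2 + legDigit i j := by
  have hd := legDigit_lt i j
  have hb := baseColor_lt (i % 4) p
  unfold palmColor
  by_cases hj : (p - 3) / 2 = j
  · subst hj
    split_ifs <;> omega
  · split_ifs <;> omega

theorem palmColor_ne_succ (i p : ℕ) : palmColor i p ≠ palmColor i (p + 1) := by
  intro h
  rcases Nat.lt_or_ge (palmColor i p) 3 with hlt | hge
  · have hsucc := palmColor_eq_baseColor_of_lt_three p.succ_pos (h ▸ hlt)
    rcases Nat.eq_zero_or_pos p with rfl | hp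
    · rw [← h, palmColor_zero, baseColor, if_pos rfl] at hsucc
      omega
    · rw [← h, palmColor_eq_baseColor_of_lt_three hp hlt] at hsucc
      exact baseColor_ne_succ _ p hsucc
  · obtain ⟨j, hj⟩ := Nat.exists_eq_add_of_le hge
    have h₁ := (palmColor_eq_three_add_iff.1 hj).2
    have h₂ := (palmColor_eq_three_add_iff.1 (h ▸ hj)).2
    omega

theorem palmColor_lt {i k : ℕ} (hi : i / 4 < 3 ^ k) (p : ℕ) : palmColor i p < k + 3 := by
  by_contra! hle
  obtain ⟨j, hj⟩ := Nat.exists_eq_add_of_le (show 3 ≤ palmColor i p by omega)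
  refine (palmColor_eq_three_add_iff.1 hj).1 (legDigit_eq_zero_of_lt (hi.trans_le ?_))
  exact Nat.pow_le_pow_right (by norm_num) (by omega)

end PalmColor

namespace PalmVert

variable {n : ℕ} {a : ℕ → ℕ} {u v : PalmVert n a}

/-- The coloring `palmColor` on the vertices of a palm. -/
def color (v : PalmVert n a) : ℕ := palmColor v.leg v.pos

theorem color_hub : (hub : PalmVert n a).color = 0 := rfl

theorem pos_pos_of_color_ne_zero (h : v.color ≠ 0) : 0 < v.pos := by
  rw [Nat.pos_iff_ne_zero]
  intro hv
  exact h (eq_hub_of_pos_eq_zero hv ▸ color_hub)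

theorem color_ne_of_isParent (h : IsParent u v) : u.color ≠ v.color := by
  have hsucc := palmColor_ne_succ v.leg u.pos
  rw [color, color, ← h.1]
  rcases h.2 with hu | hl
  · rw [hu, palmColor_zero] at hsucc ⊢
    exact hsucc
  · rwa [hl]

theorem color_ne_of_adj (h : (Palm n a).Adj u v) : u.color ≠ v.color :=
  (adj_iff.1 h).elim color_ne_of_isParent fun h => (color_ne_of_isParent h).symm

theorem baseColor_eq_of_color_eq {t : ℕ} (hv : 0 < v.pos) (ht : t < 3) (h : v.color = t) :
    baseColor (v.leg % 4) v.pos = t :=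
  (palmColor_eq_baseColor_of_lt_three hv (h.trans_lt ht)).symm.trans h

theorem colorCode_zero_le (u : PalmVert n a) : colorCode (Palm n a) color u 0 ≤ u.pos :=
  colorCode_le_pos_add_pos color_hub u

theorem colorCode_zero_eq_pos (hr : 2 ≤ u.leg % 4) : colorCode (Palm n a) color u 0 = u.pos := by
  refine (colorCode_zero_le u).antisymm
    (pos_add_le_colorCode color_hub (q := 0) (fun v hv hl => ?_) fun _ _ => Nat.zero_le _)
  by_contra hpos
  exact baseColor_ne_zero (hl ▸ hr) _
    (baseColor_eq_of_color_eq (Nat.pos_of_ne_zero hpos) (by norm_num) hv)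

theorem exists_color_eq_pos_eq_one (hn : 2 ≤ n) (ha : ∀ i < n, 1 ≤ a (i + 1)) {t : ℕ}
    (ht : t = 1 ∨ t = 2) : ∃ w : PalmVert n a, w.color = t ∧ w.pos = 1 := by
  obtain ⟨w, hl, hp⟩ := exists_leg_eq_pos_eq (n := n) (a := a) (i := t - 1) (p := 1) (by omega)
    one_pos (ha _ (by omega))
  refine ⟨w, ?_, hp⟩
  rw [color, hl, hp]
  rcases ht with rfl | rfl <;> rfl

theorem colorCode_le_pos_add_one (hn : 2 ≤ n) (ha : ∀ i < n, 1 ≤ a (i + 1)) {t : ℕ}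
    (ht : t = 1 ∨ t = 2) (u : PalmVert n a) :
    colorCode (Palm n a) color u t ≤ u.pos + 1 := by
  obtain ⟨w, hw, hp⟩ := exists_color_eq_pos_eq_one hn ha ht
  exact hp ▸ colorCode_le_pos_add_pos hw u

theorem colorCode_eq_pos_add_one (hn : 2 ≤ n) (ha : ∀ i < n, 1 ≤ a (i + 1)) {t : ℕ}
    (ht : t = 1 ∨ t = 2) (hr : u.leg % 4 + t = 2) :
    colorCode (Palm n a) color u t = u.pos + 1 := by
  obtain ⟨w, hw, -⟩ := exists_color_eq_pos_eq_one hn ha ht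
  have hpos (v : PalmVert n a) (hv : v.color = t) : 0 < v.pos :=
    pos_pos_of_color_ne_zero (by omega)
  refine (colorCode_le_pos_add_one hn ha ht u).antisymm
    (pos_add_le_colorCode hw (fun v hv hl => ?_) hpos)
  exact absurd (baseColor_eq_of_color_eq (hpos v hv) (by omega) hv)
    (baseColor_ne_of_add_eq_two (hl ▸ hr) _)

theorem exists_color_eq_dist_le_pos (ha : ∀ i < n, 1 ≤ a (i + 1))
    (ha₂ : ∀ i < n, 2 ≤ i → 2 ≤ a (i + 1)) {t : ℕ} (ht : t = 1 ∨ t = 2) (hu : 0 < u.pos)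
    (hr : u.leg % 4 + t ≠ 2) :
    ∃ w : PalmVert n a, w.color = t ∧ (Palm n a).dist u w ≤ u.pos := by
  have hlt := leg_lt hu
  obtain ⟨p, hp, hp', hpt⟩ := exists_baseColor_eq (Nat.mod_lt u.leg four_pos) ht hr
  have hpa : p ≤ a (u.leg + 1) := by
    rcases hp' with rfl | ⟨hr₂, rfl⟩
    · exact ha _ hlt
    · exact ha₂ _ hlt (hr₂.trans (Nat.mod_le _ _))
  obtain ⟨w, hwl, hwp⟩ := exists_leg_eq_pos_eq hlt hp hpa
  refine ⟨w, ?_, ?_⟩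
  · rw [color, hwl, hwp, palmColor_of_pos_of_lt_three hp (by omega), hpt]
  · rw [dist_eq_of_leg_eq hwl.symm, hwp, Nat.dist]
    omega

theorem colorCode_le_pos (ha : ∀ i < n, 1 ≤ a (i + 1)) (ha₂ : ∀ i < n, 2 ≤ i → 2 ≤ a (i + 1))
    {t : ℕ} (ht : t = 1 ∨ t = 2) (hu : 0 < u.pos) (hr : u.leg % 4 + t ≠ 2) :
    colorCode (Palm n a) color u t ≤ u.pos := by
  obtain ⟨w, hw, hle⟩ := exists_color_eq_dist_le_pos ha ha₂ ht hu hr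
  exact (colorCode_le_dist hw u).trans hle

theorem leg_eq_of_dist_le_pos (h : (Palm n a).dist u v ≤ u.pos) (hv : 0 < v.pos) :
    u.leg = v.leg := by
  by_contra hl
  rw [dist_eq_pos_add_pos fun e => absurd e hl] at h
  omega

theorem colorCode_one_mod_two (ha : ∀ i < n, 1 ≤ a (i + 1))
    (ha₂ : ∀ i < n, 2 ≤ i → 2 ≤ a (i + 1)) (hu : 0 < u.pos) (hr : 2 ≤ u.leg % 4) :
    colorCode (Palm n a) color u 1 % 2 = (u.pos + u.leg + 1) % 2 := by
  have hle := colorCode_le_pos ha ha₂ (.inl rfl) hu (by omega)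
  obtain ⟨w, hw, -⟩ := exists_color_eq_dist_le_pos ha ha₂ (.inl rfl) hu (by omega)
  obtain ⟨v, hv, h⟩ := exists_dist_eq_colorCode (G := Palm n a) hw u
  rw [← h] at hle ⊢
  have hpos : 0 < v.pos := pos_pos_of_color_ne_zero (hv ▸ one_ne_zero)
  have hl := leg_eq_of_dist_le_pos hle hpos
  have hb := (baseColor_eq_one_iff (hl ▸ hr)).1
    (baseColor_eq_of_color_eq hpos (by norm_num) hv)
  rw [dist_eq_of_leg_eq hl, Nat.dist]
  omega

theorem colorCode_profile (hn : 2 ≤ n) (ha : ∀ i < n, 1 ≤ a (i + 1))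
    (ha₂ : ∀ i < n, 2 ≤ i → 2 ≤ a (i + 1)) (hu : 0 < u.pos) :
    u.leg % 4 = 0 ∧ colorCode (Palm n a) color u 0 ≤ u.pos ∧
        colorCode (Palm n a) color u 1 ≤ u.pos ∧ colorCode (Palm n a) color u 2 = u.pos + 1 ∨
      u.leg % 4 = 1 ∧ colorCode (Palm n a) color u 0 ≤ u.pos ∧
        colorCode (Palm n a) color u 1 = u.pos + 1 ∧ colorCode (Palm n a) color u 2 ≤ u.pos ∨
      2 ≤ u.leg % 4 ∧ colorCode (Palm n a) color u 0 = u.pos ∧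
        colorCode (Palm n a) color u 1 ≤ u.pos ∧ colorCode (Palm n a) color u 2 ≤ u.pos ∧
        colorCode (Palm n a) color u 1 % 2 = (u.pos + u.leg + 1) % 2 := by
  have hzero := colorCode_zero_le u
  have hhit {t : ℕ} (ht : t = 1 ∨ t = 2) := colorCode_le_pos ha ha₂ ht hu
  have hmiss {t : ℕ} (ht : t = 1 ∨ t = 2) := colorCode_eq_pos_add_one (u := u) hn ha ht
  obtain hr | hr | hr : u.leg % 4 = 0 ∨ u.leg % 4 = 1 ∨ 2 ≤ u.leg % 4 := by omega
  · exact .inl ⟨hr, hzero, hhit (.inl rfl) (by omega), hmiss (.inr rfl) (by omega)⟩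
  · exact .inr (.inl ⟨hr, hzero, hmiss (.inl rfl) (by omega), hhit (.inr rfl) (by omega)⟩)
  · exact .inr (.inr ⟨hr, colorCode_zero_eq_pos hr, hhit (.inl rfl) (by omega),
      hhit (.inr rfl) (by omega), colorCode_one_mod_two ha ha₂ hu hr⟩)

theorem colorCode_hub (hn : 2 ≤ n) (ha : ∀ i < n, 1 ≤ a (i + 1)) {t : ℕ} (ht : t = 1 ∨ t = 2) :
    colorCode (Palm n a) color hub t = 1 := by
  obtain ⟨w, hw, -⟩ := exists_color_eq_pos_eq_one hn ha ht
  refine (colorCode_le_pos_add_one hn ha ht hub).antisymm ?_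
  exact hw ▸ colorCode_pos connected (by rw [hw, color_hub]; omega)

theorem pos_eq_and_leg_mod_four_eq_of_colorCode_eq (hn : 2 ≤ n) (ha : ∀ i < n, 1 ≤ a (i + 1))
    (ha₂ : ∀ i < n, 2 ≤ i → 2 ≤ a (i + 1)) (hu : 0 < u.pos)
    (h : ∀ t < 3, colorCode (Palm n a) color u t = colorCode (Palm n a) color v t) :
    u.pos = v.pos ∧ u.leg % 4 = v.leg % 4 := by
  have h₀ := h 0 (by norm_num)
  have h₁ := h 1 (by norm_num)
  have h₂ := h 2 (by norm_num)
  have hprofile := colorCode_profile hn ha ha₂ hu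
  rcases Nat.eq_zero_or_pos v.pos with hv | hv
  · obtain rfl := eq_hub_of_pos_eq_zero hv
    rw [colorCode_hub hn ha (.inl rfl)] at h₁
    rw [colorCode_hub hn ha (.inr rfl)] at h₂
    have hhub := colorCode_self (G := Palm n a) color (hub : PalmVert n a)
    rw [color_hub] at hhub
    omega
  · have hprofile' := colorCode_profile hn ha ha₂ hv
    omega

theorem le_colorCode_of_legDigit_eq_zero {j : ℕ} {w : PalmVert n a} (hw : w.color = 3 + j)
    (hd : legDigit u.leg j = 0) :
    u.pos + (2 * j + 3) ≤ colorCode (Palm n a) color u (3 + j) := by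
  refine pos_add_le_colorCode hw (fun v hv hl => ?_) fun v hv => ?_ <;>
    obtain ⟨hne, hpos⟩ := palmColor_eq_three_add_iff.1 hv
  · exact absurd (hl ▸ hd) hne
  · omega

theorem exists_color_eq_three_add
    (hdig : ∀ i < n, ∀ j, legDigit i j ≠ 0 → 2 * j + 2 + legDigit i j ≤ a (i + 1))
    {i j : ℕ} (hi : i < n) (hd : legDigit i j ≠ 0) : ∃ w : PalmVert n a,
      w.color = 3 + j ∧ w.leg = i ∧ w.pos = 2 * j + 2 + legDigit i j := by
  obtain ⟨w, rfl, hwp⟩ := exists_leg_eq_pos_eq hi (by omega) (hdig i hi j hd)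
  exact ⟨w, palmColor_eq_three_add_iff.2 ⟨hd, hwp⟩, rfl, hwp⟩

theorem colorCode_of_legDigit_ne_zero
    (hdig : ∀ i < n, ∀ j, legDigit i j ≠ 0 → 2 * j + 2 + legDigit i j ≤ a (i + 1))
    {j : ℕ} (hu : 0 < u.pos) (hd : legDigit u.leg j ≠ 0) :
    colorCode (Palm n a) color u (3 + j) =
      Nat.dist u.pos (2 * j + 2 + legDigit u.leg j) := by
  obtain ⟨w, hw, hwl, hwp⟩ := exists_color_eq_three_add hdig (leg_lt hu) hd
  have hle := colorCode_le_dist (G := Palm n a) hw u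
  obtain ⟨v, hv, h⟩ := exists_dist_eq_colorCode (G := Palm n a) hw u
  obtain ⟨hvd, hvp⟩ := palmColor_eq_three_add_iff.1 hv
  have hlt := legDigit_lt u.leg j
  rw [← h, dist_eq_of_leg_eq hwl.symm, hwp] at hle
  rw [← h]
  by_cases hl : u.leg = v.leg
  · rw [dist_eq_of_leg_eq hl, hvp, hl]
  · rw [dist_eq_pos_add_pos fun e => absurd e hl, Nat.dist] at hle
    omega

theorem legDigit_eq_zero_of_colorCode_eq
    (hdig : ∀ i < n, ∀ j, legDigit i j ≠ 0 → 2 * j + 2 + legDigit i j ≤ a (i + 1))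
    {j : ℕ} (hu : 0 < u.pos) (hv : 0 < v.pos) (hp : u.pos = v.pos)
    (h : colorCode (Palm n a) color u (3 + j) = colorCode (Palm n a) color v (3 + j))
    (hd : legDigit u.leg j = 0) : legDigit v.leg j = 0 := by
  by_contra hd'
  obtain ⟨w, hw, -⟩ := exists_color_eq_three_add hdig (leg_lt hv) hd'
  have hfar := le_colorCode_of_legDigit_eq_zero hw hd
  have hlt := legDigit_lt v.leg j
  rw [h, colorCode_of_legDigit_ne_zero hdig hv hd', Nat.dist] at hfar
  omega

theorem legDigit_eq_of_colorCode_eq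
    (hdig : ∀ i < n, ∀ j, legDigit i j ≠ 0 → 2 * j + 2 + legDigit i j ≤ a (i + 1))
    {j : ℕ} (hu : 0 < u.pos) (hp : u.pos = v.pos)
    (h : colorCode (Palm n a) color u (3 + j) = colorCode (Palm n a) color v (3 + j)) :
    legDigit u.leg j = legDigit v.leg j := by
  have hv : 0 < v.pos := hp ▸ hu
  by_cases hdu : legDigit u.leg j = 0
  · rw [hdu, legDigit_eq_zero_of_colorCode_eq hdig hu hv hp h hdu]
  · have hdv : legDigit v.leg j ≠ 0 := fun hdv =>
      hdu (legDigit_eq_zero_of_colorCode_eq hdig hv hu hp.symm h.symm hdv)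
    rw [colorCode_of_legDigit_ne_zero hdig hu hdu,
      colorCode_of_legDigit_ne_zero hdig hv hdv, hp, Nat.dist, Nat.dist] at h
    have hltu := legDigit_lt u.leg j
    have hltv := legDigit_lt v.leg j
    omega

theorem eq_of_colorCode_eq (hn : 2 ≤ n) {k : ℕ} (hk : n ≤ 4 * 3 ^ k)
    (ha : ∀ i < n, 1 ≤ a (i + 1)) (ha₂ : ∀ i < n, 2 ≤ i → 2 ≤ a (i + 1))
    (hdig : ∀ i < n, ∀ j, legDigit i j ≠ 0 → 2 * j + 2 + legDigit i j ≤ a (i + 1))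
    (h : ∀ t < k + 3, colorCode (Palm n a) color u t = colorCode (Palm n a) color v t)
    (hu : 0 < u.pos) : u = v := by
  obtain ⟨hp, hr⟩ := pos_eq_and_leg_mod_four_eq_of_colorCode_eq hn ha ha₂ hu fun t ht =>
    h t (by omega)
  have hdigits : u.leg / 4 % 3 ^ k = v.leg / 4 % 3 ^ k :=
    mod_pow_eq_mod_pow_of_digits_eq fun j hj =>
      legDigit_eq_of_colorCode_eq hdig hu hp (h _ (by omega))
  have hul := leg_lt hu
  have hvl := leg_lt (hp ▸ hu)
  rw [Nat.mod_eq_of_lt (by omega), Nat.mod_eq_of_lt (by omega)] at hdigits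
  exact ext_leg_pos (by omega) hp

theorem exists_isLocatingColoring (hn : 2 ≤ n) {k : ℕ} (hk : n ≤ 4 * 3 ^ k)
    (ha : ∀ i < n, 1 ≤ a (i + 1)) (ha₂ : ∀ i < n, 2 ≤ i → 2 ≤ a (i + 1))
    (hdig : ∀ i < n, ∀ j, legDigit i j ≠ 0 → 2 * j + 2 + legDigit i j ≤ a (i + 1)) :
    ∃ c : PalmVert n a → Fin (k + 3), IsLocatingColoring (Palm n a) c := by
  have hlt (v : PalmVert n a) : v.color < k + 3 := by
    rcases Nat.eq_zero_or_pos v.pos with hv | hv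
    · rw [eq_hub_of_pos_eq_zero hv, color_hub]
      omega
    · have := leg_lt hv
      exact palmColor_lt (by omega) v.pos
  refine ⟨_, isLocatingColoring_of_nat hlt (fun _ _ => color_ne_of_adj) fun u v h => ?_⟩
  rcases Nat.eq_zero_or_pos u.pos with hu | hu
  · rcases Nat.eq_zero_or_pos v.pos with hv | hv
    · exact (eq_hub_of_pos_eq_zero hu).trans (eq_hub_of_pos_eq_zero hv).symm
    · exact (eq_of_colorCode_eq hn hk ha ha₂ hdig (fun t ht => (h t ht).symm) hv).symm
  · exact eq_of_colorCode_eq hn hk ha ha₂ hdig h hu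

theorem mul_le_of_isLocatingColoring (ha : ∀ i < n, 1 ≤ a (i + 1)) {m : ℕ}
    {c : PalmVert n a → Fin m} (hc : IsLocatingColoring (Palm n a) c) : 27 * n ≤ 4 * 3 ^ m := by
  classical
  choose y hl hp using fun i : Fin n => exists_leg_eq_pos_eq i.2 one_pos (ha i i.2)
  have hinj : Function.Injective y := fun i j h =>
    Fin.ext ((hl i).symm.trans ((congrArg leg h).trans (hl j)))
  have hadj : ∀ v ∈ Finset.univ.image y, (Palm n a).Adj hub v := by
    simp only [Finset.mem_image, Finset.mem_univ, true_and, forall_exists_index,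
      forall_apply_eq_imp_iff]
    exact fun i => adj_iff.2 (.inl ⟨(hp i).symm, .inl pos_hub⟩)
  simpa [Finset.card_image_of_injective _ hinj] using hc.mul_card_neighbors_le connected hadj

theorem locatingChromaticNumber_palm_eq (hn : 2 ≤ n) {k : ℕ} (hk : ∀ j, k ≤ j ↔ n ≤ 4 * 3 ^ j)
    (ha : ∀ i < n, 1 ≤ a (i + 1)) (ha₂ : ∀ i < n, 2 ≤ i → 2 ≤ a (i + 1))
    (hdig : ∀ i < n, ∀ j, legDigit i j ≠ 0 → 2 * j + 2 + legDigit i j ≤ a (i + 1)) :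
    locatingChromaticNumber (Palm n a) = k + 3 := by
  have hex := exists_isLocatingColoring hn ((hk k).1 le_rfl) ha ha₂ hdig
  refine (Nat.sInf_le hex).antisymm (le_csInf ⟨_, hex⟩ ?_)
  rintro m ⟨c, hc⟩
  have hbound := mul_le_of_isLocatingColoring ha hc
  have hm : 3 ≤ m := by
    by_contra! hm
    have : 3 ^ m ≤ 3 ^ 2 := Nat.pow_le_pow_right (by norm_num) (by omega)
    omega
  obtain ⟨j, rfl⟩ := Nat.exists_eq_add_of_le' hm
  rw [pow_add] at hbound
  exact Nat.add_le_add_right ((hk j).2 (by omega)) 3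

end PalmVert

section Logb

variable {b c x : ℝ}

theorem logb_div_le_natCast_iff (hb : 1 < b) (hc : 0 < c) (hx : 0 < x) {j : ℕ} :
    Real.logb b (x / c) ≤ j ↔ x ≤ c * b ^ j := by
  rw [Real.logb_le_iff_le_rpow hb (div_pos hx hc), Real.rpow_natCast, div_le_iff₀' hc]

theorem natCast_le_logb_div_iff (hb : 1 < b) (hc : 0 < c) (hx : 0 < x) {j : ℕ} :
    j ≤ Real.logb b (x / c) ↔ c * b ^ j ≤ x := by
  rw [Real.le_logb_iff_rpow_le hb (div_pos hx hc), Real.rpow_natCast, le_div_iff₀' hc]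

theorem exists_ceil_logb_three_div_four_eq {n : ℕ} (hn : 2 ≤ n) :
    ∃ k : ℕ, ⌈Real.logb 3 ((n : ℝ) / 4)⌉ = k ∧ ∀ j, k ≤ j ↔ n ≤ 4 * 3 ^ j := by
  have hn' : (2 : ℝ) ≤ n := by exact_mod_cast hn
  have hnonneg : 0 ≤ ⌈Real.logb 3 ((n : ℝ) / 4)⌉ := by
    rw [Int.le_ceil_iff, Real.lt_logb_iff_rpow_lt (by norm_num) (by positivity)]
    norm_num [Real.rpow_neg_one]
    linarith
  obtain ⟨k, hk⟩ := Int.eq_ofNat_of_zero_le hnonneg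
  refine ⟨k, hk, fun j => ?_⟩
  rw [← Nat.cast_le (α := ℤ), ← hk, Int.ceil_le, Int.cast_natCast,
    logb_div_le_natCast_iff (by norm_num) (by norm_num) (by positivity)]
  norm_cast

end Logb

theorem two_mul_add_two_add_legDigit_le {n : ℕ} {a : ℕ → ℕ}
    (hmono : ∀ i j, 1 ≤ i → i ≤ j → j ≤ n → a i ≤ a j)
    (hlong : ∀ k, 4 * 3 ^ k ≤ n → 2 * k + 3 ≤ a (4 * 3 ^ k + 1) ∧ 2 * k + 4 ≤ a (8 * 3 ^ k + 1))
    {i : ℕ} (hi : i < n) {j : ℕ} (hd : legDigit i j ≠ 0) :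
    2 * j + 2 + legDigit i j ≤ a (i + 1) := by
  have hlt := legDigit_lt i j
  have hle := legDigit_mul_three_pow_le i j
  obtain hd | hd : legDigit i j = 1 ∨ legDigit i j = 2 := by omega
  all_goals rw [hd] at hle ⊢
  · exact (hlong j (by omega)).1.trans (hmono _ _ (by omega) (by omega) hi)
  · exact (hlong j (by omega)).2.trans (hmono _ _ (by omega) (by omega) hi)

/-- Let `n ≥ 2` and `G = S_n(a_1, …, a_n)` be a palm with
`1 ≤ a_1 ≤ a_2 ≤ ⋯ ≤ a_n`. If `a_3 ≥ 2` and, for every nonnegative integer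
`k ≤ log_3(n/4)`, `a_{4·3^k + 1} ≥ 2k + 3` and `a_{8·3^k + 1} ≥ 2k + 4`, then
`χ_L(G) = ⌈log_3(n/4)⌉ + 3`. -/
theorem locatingChromaticNumber_palm_eq_of_long_legs (n : ℕ) (hn : 2 ≤ n) (a : ℕ → ℕ)
    (ha₁ : 1 ≤ a 1)
    (hmono : ∀ i j, 1 ≤ i → i ≤ j → j ≤ n → a i ≤ a j)
    (ha₃ : 2 ≤ a 3)
    (hlong : ∀ k : ℕ, (k : ℝ) ≤ Real.logb 3 ((n : ℝ) / 4) →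
      2 * k + 3 ≤ a (4 * 3 ^ k + 1) ∧ 2 * k + 4 ≤ a (8 * 3 ^ k + 1)) :
    (locatingChromaticNumber (Palm n a) : ℤ) = ⌈Real.logb 3 ((n : ℝ) / 4)⌉ + 3 := by
  obtain ⟨k, hceil, hk⟩ := exists_ceil_logb_three_div_four_eq hn
  have hone (i : ℕ) (hi : i < n) : 1 ≤ a (i + 1) :=
    ha₁.trans (hmono 1 (i + 1) le_rfl (by omega) hi)
  have htwo (i : ℕ) (hi : i < n) (h : 2 ≤ i) : 2 ≤ a (i + 1) :=
    ha₃.trans (hmono 3 (i + 1) (by norm_num) (by omega) hi)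
  have hlong' (k : ℕ) (h : 4 * 3 ^ k ≤ n) :
      2 * k + 3 ≤ a (4 * 3 ^ k + 1) ∧ 2 * k + 4 ≤ a (8 * 3 ^ k + 1) := by
    refine hlong k ((natCast_le_logb_div_iff (by norm_num) (by norm_num) (by positivity)).2 ?_)
    exact_mod_cast h
  rw [PalmVert.locatingChromaticNumber_palm_eq hn hk hone htwo fun i hi j =>
    two_mul_add_two_add_legDigit_le hmono hlong' hi, hceil]
  rfl
end

section
/- Define f(p) = (p−1)⌊p²/4⌋ − ⌊(p²−2p)/4⌋ for integers p ≥ 3 (with f(2) computed by the same formula). Then for every n ≥ 2 and every integer p ≥ 3: χ_L(S_n(3)) = p if and only if f(p−1) < n ≤ f(p). -/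
open SimpleGraph

/-- `f(p) = (p-1)·⌊p²/4⌋ - ⌊(p²-2p)/4⌋` (for `p ≥ 2` the natural-number divisions and
subtraction agree with the intended integer floors). -/
def palmThreeBound (p : ℕ) : ℤ :=
  ((p : ℤ) - 1) * ((p ^ 2 / 4 : ℕ) : ℤ) - (((p ^ 2 - 2 * p) / 4 : ℕ) : ℤ)

/-!
A coloring is locating iff it is proper and different vertices see different families of color
sets in the balls around them. In `S_n(3)` let `h` be the color of the hub and `X` the set of
colors of the first leg vertices. From the first vertex of a leg colored `(x, y, z)` the color `z`
is invisible if it lies in `X ∪ {h}`, so replacing it by `x` maps the legs of a locating coloring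
injectively to the triples with `x ∈ X`, `y ∉ {x, z}`, and `z = x` or `z ∉ X ∪ {h}`. For `a = |X|`
and `p` colors there are `(p - 2) a (p - a) + a` of these, which is largest at `a = ⌈p / 2⌉`, with
value `f(p)`. Conversely, any `n` different triples of this kind that use every color of `X` as
their `x` give a locating coloring if `|X| ≥ 2`.
-/

section ColorsWithin

variable {V α : Type*} {G : SimpleGraph V} {c : V → α} {u v : V} {s : α} {r : ℕ}

/-- The colors seen from `u` within distance `r`. As a function of `r` this is the color code of
`u`, with the distances to the color classes replaced by the balls they determine. -/
def colorsWithin (G : SimpleGraph V) (c : V → α) (u : V) (r : ℕ) : Set α :=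
  c '' {v | G.dist u v ≤ r}

theorem mem_colorsWithin : s ∈ colorsWithin G c u r ↔ ∃ v, G.dist u v ≤ r ∧ c v = s := Iff.rfl

theorem colorsWithin_zero (hG : G.Connected) : colorsWithin G c u 0 = {c u} := by
  ext s
  simp [mem_colorsWithin, hG.dist_eq_zero_iff, eq_comm]

theorem color_eq_of_colorsWithin_eq (hG : G.Connected)
    (h : colorsWithin G c u = colorsWithin G c v) : c u = c v := by
  have within_zero := congrFun h 0
  rwa [colorsWithin_zero hG, colorsWithin_zero hG, Set.singleton_eq_singleton_iff] at within_zero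

theorem distToSet_le_iff_mem_colorsWithin (hs : s ∈ Set.range c) :
    distToSet G u (c ⁻¹' {s}) ≤ r ↔ s ∈ colorsWithin G c u r := by
  constructor
  · intro h
    have nonempty : (c ⁻¹' {s}).Nonempty := hs
    obtain ⟨v, hv, hvu⟩ := Nat.sInf_mem (nonempty.image (G.dist u))
    exact ⟨v, hvu.trans_le h, hv⟩
  · rintro ⟨v, hle, hv⟩
    calc distToSet G u (c ⁻¹' {s}) ≤ G.dist u v := Nat.sInf_le (Set.mem_image_of_mem _ hv)
      _ ≤ r := hle

theorem colorsWithin_eq_iff_distToSet_eq :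
    colorsWithin G c u = colorsWithin G c v ↔
      ∀ s, distToSet G u (c ⁻¹' {s}) = distToSet G v (c ⁻¹' {s}) := by
  constructor
  · intro h s
    by_cases hs : s ∈ Set.range c
    · refine eq_of_forall_ge_iff fun r => ?_
      rw [distToSet_le_iff_mem_colorsWithin hs, distToSet_le_iff_mem_colorsWithin hs, h]
    · simp [Set.preimage_singleton_eq_empty.2 hs, distToSet]
  · intro h
    ext r s
    by_cases hs : s ∈ Set.range c
    · rw [← distToSet_le_iff_mem_colorsWithin hs, ← distToSet_le_iff_mem_colorsWithin hs, h]
    · exact iff_of_false (hs <| Set.image_subset_range _ _ ·) (hs <| Set.image_subset_range _ _ ·)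

theorem isLocatingColoring_iff_injective_colorsWithin {k : ℕ} {c : V → Fin k} :
    IsLocatingColoring G c ↔
      (∀ u v, G.Adj u v → c u ≠ c v) ∧ Function.Injective (colorsWithin G c) := by
  refine and_congr_right fun _ => forall₂_congr fun u v => ?_
  rw [colorsWithin_eq_iff_distToSet_eq, ← not_forall, Ne, not_imp_not]

end ColorsWithin

theorem abs_sub_le_dist_of_lipschitz {V : Type*} {G : SimpleGraph V} {f : V → ℤ}
    (hf : ∀ u v, G.Adj u v → |f u - f v| ≤ 1) {u v : V} (huv : G.Reachable u v) :
    |f u - f v| ≤ G.dist u v := by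
  obtain ⟨p, hp⟩ := huv.exists_walk_length_eq_dist
  rw [← hp]
  clear hp huv
  induction p with
  | nil => simp
  | @cons u v w h p ih =>
    calc |f u - f w| ≤ |f u - f v| + |f v - f w| := abs_sub_le _ _ _
      _ ≤ 1 + p.length := add_le_add (hf _ _ h) ih
      _ = (p.cons h).length := by simp [add_comm]

namespace Palm

section Distances

variable {n : ℕ} {a : ℕ → ℕ}

/-- The hub `a_0` of a palm. -/
def hub : PalmVert n a := none

/-- The vertex `a_{i+1,j+1}` of a palm: legs and their vertices are counted from zero. -/
def legVert (i : Fin n) (j : Fin (a (i + 1))) : PalmVert n a := some ⟨i, j⟩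

@[elab_as_elim]
theorem vertCases {motive : PalmVert n a → Prop} (hub : motive hub)
    (legVert : ∀ i j, motive (legVert i j)) : ∀ u, motive u
  | none => hub
  | some ⟨i, j⟩ => legVert i j

theorem adj_hub_legVert {i : Fin n} {j : Fin (a (i + 1))} :
    (Palm n a).Adj hub (legVert i j) ↔ (j : ℕ) = 0 :=
  (fromRel_adj _ _ _).trans ⟨fun h => h.2.resolve_right id, fun h => ⟨nofun, .inl h⟩⟩

theorem adj_legVert_legVert {i l : Fin n} {j : Fin (a (i + 1))} {m : Fin (a (l + 1))} :
    (Palm n a).Adj (legVert i j) (legVert l m) ↔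
      i = l ∧ ((m : ℕ) = j + 1 ∨ (j : ℕ) = m + 1) := by
  refine (fromRel_adj _ _ _).trans ⟨?_, ?_⟩
  · rintro ⟨-, ⟨hil, hjm⟩ | ⟨hil, hjm⟩⟩
    · exact ⟨Fin.ext hil, .inl hjm⟩
    · exact ⟨Fin.ext hil.symm, .inr hjm⟩
  · rintro ⟨rfl, hjm⟩
    refine ⟨fun heq => ?_, hjm.imp (⟨rfl, ·⟩) (⟨rfl, ·⟩)⟩
    cases heq
    omega

theorem exists_walk_legVert_of_le (i : Fin n) {j m : Fin (a (i + 1))} (hjm : j ≤ m) :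
    ∃ p : (Palm n a).Walk (legVert i j) (legVert i m), p.length = (m - j : ℕ) := by
  obtain ⟨m, hm⟩ := m
  replace hjm : (j : ℕ) ≤ m := hjm
  induction m, hjm using Nat.le_induction with
  | base => exact ⟨.nil, by simp⟩
  | succ m hjm ih =>
    obtain ⟨p, hp⟩ := ih (by omega)
    refine ⟨p.concat (adj_legVert_legVert.2 ⟨rfl, .inl rfl⟩), ?_⟩
    rw [Walk.length_concat, hp, Nat.succ_sub hjm]

theorem exists_walk_hub_legVert (i : Fin n) (j : Fin (a (i + 1))) :
    ∃ p : (Palm n a).Walk hub (legVert i j), p.length = j + 1 := by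
  obtain ⟨p, hp⟩ := exists_walk_legVert_of_le i (j := ⟨0, j.pos⟩) (m := j) (Nat.zero_le j)
  exact ⟨p.cons (adj_hub_legVert.2 rfl), by simp [hp]⟩

theorem connected : (Palm n a).Connected := by
  refine connected_iff_exists_forall_reachable _ |>.2 ⟨hub, fun v => ?_⟩
  cases v using vertCases with
  | hub => rfl
  | legVert i j => exact (exists_walk_hub_legVert i j).choose.reachable

/-- The position along the line that leg `i` spans together with the other legs, which are
folded onto each other beyond the hub at `0`. The distance from a vertex of leg `i` is the
difference of positions. -/
def position (i : Fin n) : PalmVert n a → ℤ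
  | none => 0
  | some ⟨l, j⟩ => if l = i then j + 1 else -(j + 1)

theorem position_hub (i : Fin n) : position i (hub : PalmVert n a) = 0 := rfl

theorem position_legVert (i l : Fin n) (j : Fin (a (l + 1))) :
    position i (legVert l j) = if l = i then (j + 1 : ℤ) else -(j + 1) := rfl

theorem abs_position_sub_le_one (i : Fin n) (u v : PalmVert n a) (huv : (Palm n a).Adj u v) :
    |position i u - position i v| ≤ 1 := by
  cases u using vertCases with
  | hub =>
    cases v using vertCases with
    | hub => simp
    | legVert l j =>
      rw [adj_hub_legVert] at huv
      rw [position_hub, position_legVert]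
      grind
  | legVert l j =>
    cases v using vertCases with
    | hub =>
      rw [adj_comm, adj_hub_legVert] at huv
      rw [position_hub, position_legVert]
      grind
    | legVert l m =>
      obtain ⟨rfl, hjm⟩ := adj_legVert_legVert.1 huv
      rw [position_legVert, position_legVert]
      grind

theorem abs_position_sub_le_dist (i : Fin n) (u v : PalmVert n a) :
    |position i u - position i v| ≤ (Palm n a).dist u v :=
  abs_sub_le_dist_of_lipschitz (abs_position_sub_le_one i) (connected u v)

theorem dist_hub_legVert (i : Fin n) (j : Fin (a (i + 1))) :
    (Palm n a).dist hub (legVert i j) = j + 1 := by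
  obtain ⟨p, hp⟩ := exists_walk_hub_legVert i j
  have lower := abs_position_sub_le_dist i hub (legVert i j)
  rw [position_hub, position_legVert, if_pos rfl] at lower
  have upper := dist_le p
  grind

theorem dist_legVert_legVert_same (i : Fin n) (j m : Fin (a (i + 1))) :
    (Palm n a).dist (legVert i j) (legVert i m) = (j - m : ℤ).natAbs := by
  wlog hjm : j ≤ m generalizing j m
  · rw [dist_comm, this m j (le_of_not_ge hjm), ← Int.natAbs_neg, neg_sub]
  obtain ⟨p, hp⟩ := exists_walk_legVert_of_le i hjm
  have lower := abs_position_sub_le_dist i (legVert i j) (legVert i m)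
  rw [position_legVert, position_legVert, if_pos rfl, if_pos rfl] at lower
  have upper := dist_le p
  grind

theorem dist_legVert_legVert_of_ne {i l : Fin n} (hil : i ≠ l) (j : Fin (a (i + 1)))
    (m : Fin (a (l + 1))) :
    (Palm n a).dist (legVert i j) (legVert l m) = (j + 1) + (m + 1) := by
  have lower := abs_position_sub_le_dist i (legVert i j) (legVert l m)
  rw [position_legVert, position_legVert, if_pos rfl, if_neg hil.symm] at lower
  have upper := connected.dist_triangle (u := legVert i j) (v := hub) (w := legVert l m)
  rw [dist_comm (v := hub), dist_hub_legVert, dist_hub_legVert] at upper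
  grind

variable {α : Type*} {c : PalmVert n a → α} {s : α} {r : ℕ}

theorem mem_colorsWithin_hub :
    s ∈ colorsWithin (Palm n a) c hub r ↔
      s = c hub ∨ ∃ i j, s = c (legVert i j) ∧ (j : ℕ) + 1 ≤ r := by
  constructor
  · rw [mem_colorsWithin]
    rintro ⟨v, hv, rfl⟩
    cases v using vertCases with
    | hub => exact .inl rfl
    | legVert i j => exact .inr ⟨i, j, rfl, (dist_hub_legVert i j).symm.trans_le hv⟩
  · rintro (rfl | ⟨i, j, rfl, hj⟩)
    · exact ⟨hub, by simp, rfl⟩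
    · exact ⟨legVert i j, (dist_hub_legVert i j).trans_le hj, rfl⟩

theorem mem_colorsWithin_legVert {i : Fin n} {j : Fin (a (i + 1))} :
    s ∈ colorsWithin (Palm n a) c (legVert i j) r ↔
      (∃ m, s = c (legVert i m) ∧ (j - m : ℤ).natAbs ≤ r) ∨
        j + 1 ≤ r ∧ s ∈ colorsWithin (Palm n a) c hub (r - (j + 1)) := by
  constructor
  · rw [mem_colorsWithin]
    rintro ⟨v, hv, rfl⟩
    cases v using vertCases with
    | hub =>
      rw [dist_comm, dist_hub_legVert] at hv
      exact .inr ⟨hv, hub, by simp, rfl⟩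
    | legVert l m =>
      by_cases hil : i = l
      · subst hil
        exact .inl ⟨m, rfl, (dist_legVert_legVert_same i j m).symm.trans_le hv⟩
      · rw [dist_legVert_legVert_of_ne hil] at hv
        refine .inr ⟨by omega, mem_colorsWithin.2 ⟨legVert l m, ?_, rfl⟩⟩
        rw [dist_hub_legVert]
        omega
  · rintro (⟨m, rfl, hm⟩ | ⟨hj, v, hv, rfl⟩)
    · exact ⟨legVert i m, (dist_legVert_legVert_same i j m).trans_le hm, rfl⟩
    · refine ⟨v, ?_, rfl⟩
      calc (Palm n a).dist (legVert i j) v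
          ≤ (Palm n a).dist (legVert i j) hub + (Palm n a).dist hub v := connected.dist_triangle
        _ ≤ (j + 1) + (r - (j + 1)) := by
          rw [dist_comm, dist_hub_legVert]
          exact Nat.add_le_add_left hv _
        _ = r := Nat.add_sub_cancel' hj

end Distances

end Palm

section CanonicalLegs

open Finset

variable {α : Type*} [Fintype α] [DecidableEq α]

/-- The properly colored legs `(x, y, z)`, read from the hub outwards, of a palm with hub color `h`
whose first leg vertices have their colors in `A`. A third color in `insert h A` is seen from the
first vertex of every leg, so it carries no information and is normalized to `z = x`. -/
def canonicalLegs (h : α) (A : Finset α) : Finset (α × α × α) :=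
  {ℓ | ℓ.1 ∈ A ∧ ℓ.2.1 ≠ ℓ.1 ∧ ℓ.2.1 ≠ ℓ.2.2 ∧ (ℓ.2.2 = ℓ.1 ∨ ℓ.2.2 ∉ insert h A)}

/-- The number of canonical legs when `a` out of `p` colors occur on first leg vertices. -/
def legCount (p a : ℕ) : ℕ := (p - 2) * (a * (p - a)) + a

variable {h : α} {A : Finset α}

theorem mem_canonicalLegs {x y z : α} :
    (x, y, z) ∈ canonicalLegs h A ↔ x ∈ A ∧ y ≠ x ∧ y ≠ z ∧ (z = x ∨ z ∉ insert h A) := by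
  simp [canonicalLegs]

theorem card_sigma_compl_pair {x : α} {B : Finset α} (hx : x ∉ B) :
    #((insert x B).sigma fun z => ({x, z} : Finset α)ᶜ) =
      #B * (Fintype.card α - 2) + (Fintype.card α - 1) := by
  have card_compl_pair (z : α) (hz : z ∈ B) : #({x, z} : Finset α)ᶜ = Fintype.card α - 2 := by
    rw [card_compl, card_pair (ne_of_mem_of_not_mem hz hx).symm]
  rw [card_sigma, sum_insert hx, sum_congr rfl card_compl_pair, sum_const, pair_eq_singleton,
    card_compl, card_singleton, smul_eq_mul, add_comm]

theorem card_canonicalLegs_eq_card_sigma (h : α) (A : Finset α) :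
    #(canonicalLegs h A) =
      #(A.sigma fun x => (insert x (insert h A)ᶜ).sigma fun z => ({x, z} : Finset α)ᶜ) := by
  have mem_sigma_iff (x y z : α) :
      (⟨x, z, y⟩ : Σ _ _ : α, α) ∈
          A.sigma (fun x => (insert x (insert h A)ᶜ).sigma fun z => ({x, z} : Finset α)ᶜ) ↔
        (x, y, z) ∈ canonicalLegs h A := by
    simp only [mem_sigma, mem_canonicalLegs, mem_insert, mem_compl, mem_singleton]
    tauto
  exact card_nbij' (fun ℓ => ⟨ℓ.1, ℓ.2.2, ℓ.2.1⟩) (fun ℓ => (ℓ.1, ℓ.2.2, ℓ.2.1))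
    (fun _ => (mem_sigma_iff ..).2) (fun _ => (mem_sigma_iff ..).1) (fun _ _ => rfl)
    (fun _ _ => rfl)

theorem card_canonicalLegs (hA : h ∉ A) :
    #(canonicalLegs h A) = legCount (Fintype.card α) #A := by
  have card_compl_insert : #(insert h A)ᶜ + #A + 1 = Fintype.card α := by
    rw [add_assoc, ← card_insert_of_notMem hA, card_compl_add_card]
  have card_fiber (x : α) (hx : x ∈ A) :
      #((insert x (insert h A)ᶜ).sigma fun z => ({x, z} : Finset α)ᶜ) =
        (Fintype.card α - 2) * (Fintype.card α - #A) + 1 := by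
    have card_pos : 0 < #A := card_pos.2 ⟨x, hx⟩
    rw [card_sigma_compl_pair (notMem_compl.2 (mem_insert_of_mem hx)),
      show Fintype.card α - #A = #(insert h A)ᶜ + 1 by omega,
      show Fintype.card α - 1 = Fintype.card α - 2 + 1 by omega]
    ring
  rw [card_canonicalLegs_eq_card_sigma, card_sigma, sum_congr rfl card_fiber, sum_const,
    smul_eq_mul, legCount]
  ring

end CanonicalLegs

section PalmThreeBound

theorem palmThreeBound_eq_legCount {p : ℕ} (hp : 2 ≤ p) :
    palmThreeBound p = legCount p ((p + 1) / 2) := by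
  obtain ⟨q, rfl | rfl⟩ := p.even_or_odd'
  · have hq : q ≤ q ^ 2 := Nat.le_self_pow two_ne_zero q
    have sq_div : (2 * q) ^ 2 / 4 = q ^ 2 := by grind
    have sq_sub_div : ((2 * q) ^ 2 - 2 * (2 * q)) / 4 = q ^ 2 - q := by grind
    have half : (2 * q + 1) / 2 = q := by omega
    rw [palmThreeBound, legCount, sq_div, sq_sub_div, half, show 2 * q - q = q by omega]
    push_cast [hp, hq]
    ring
  · have hq : 1 ≤ q ^ 2 := Nat.one_le_pow _ _ (by omega)
    have sq_div : (2 * q + 1) ^ 2 / 4 = q ^ 2 + q := by grind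
    have sq_sub_div : ((2 * q + 1) ^ 2 - 2 * (2 * q + 1)) / 4 = q ^ 2 - 1 := by grind
    have half : (2 * q + 1 + 1) / 2 = q + 1 := by omega
    rw [palmThreeBound, legCount, sq_div, sq_sub_div, half, show 2 * q + 1 - (q + 1) = q by omega,
      show 2 * q + 1 - 2 = 2 * q - 1 by omega]
    push_cast [show 1 ≤ 2 * q by omega, hq]
    ring

theorem legCount_le_palmThreeBound {p a : ℕ} (hp : 2 ≤ p) (ha : a < p) :
    legCount p a ≤ palmThreeBound p := by
  rw [palmThreeBound_eq_legCount hp, legCount, legCount, Nat.cast_le]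
  obtain ⟨c, hc⟩ : ∃ c, (p + 1) / 2 = c := ⟨_, rfl⟩
  rw [hc]
  zify [hp, ha.le, show c ≤ p by omega]
  have factored : (((p - 2) * (c * (p - c)) + c) - ((p - 2) * (a * (p - a)) + a) : ℤ) =
      (c - a) * ((p - 2) * (p - a - c) + 1) := by ring
  rw [← sub_nonneg, factored]
  rcases le_or_gt a c with hac | hac
  · rcases hac.eq_or_lt with rfl | hac
    · simp
    have : (0 : ℤ) ≤ p - a - c := by omega
    have : (0 : ℤ) ≤ p - 2 := by omega
    exact mul_nonneg (by omega) (by positivity)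
  · have : (p - a - c : ℤ) ≤ -1 := by omega
    exact mul_nonneg_of_nonpos_of_nonpos (by omega) (by nlinarith)

theorem palmThreeBound_mono : Monotone palmThreeBound := by
  refine monotone_nat_of_le_succ fun p => ?_
  match p with
  | 0 | 1 => decide
  | p + 2 =>
    calc palmThreeBound (p + 2) = legCount (p + 2) ((p + 2 + 1) / 2) :=
          palmThreeBound_eq_legCount (by omega)
      _ ≤ legCount (p + 2 + 1) ((p + 2 + 1) / 2) := by
          rw [Nat.cast_le, legCount, legCount]
          refine Nat.add_le_add_right (Nat.mul_le_mul ?_ (Nat.mul_le_mul_left _ ?_)) _ <;> omega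
      _ ≤ palmThreeBound (p + 2 + 1) := legCount_le_palmThreeBound (by omega) (by omega)

end PalmThreeBound

namespace Palm

section LegsOfLengthThree

variable {n : ℕ} {α : Type*}

/-- The `j`-th vertex of the `i`-th leg of `S_n(3)`, both counted from zero. It is `legVert` with
the length of the leg exposed, so that `j` can be a numeral. -/
def vert (i : Fin n) (j : Fin 3) : PalmVert n (fun _ => 3) := legVert i j

@[elab_as_elim]
theorem vertThreeCases {motive : PalmVert n (fun _ => 3) → Prop} (hub : motive hub)
    (first : ∀ i, motive (vert i 0)) (second : ∀ i, motive (vert i 1))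
    (third : ∀ i, motive (vert i 2)) : ∀ u, motive u
  | none => hub
  | some ⟨i, 0⟩ => first i
  | some ⟨i, 1⟩ => second i
  | some ⟨i, 2⟩ => third i

theorem adj_hub_vert {i : Fin n} {j : Fin 3} :
    (Palm n _).Adj hub (vert i j) ↔ j = 0 :=
  adj_hub_legVert.trans (Fin.val_eq_zero_iff (a := j))

theorem adj_vert_vert {i l : Fin n} {j m : Fin 3} :
    (Palm n _).Adj (vert i j) (vert l m) ↔
      i = l ∧ ((m : ℕ) = j + 1 ∨ (j : ℕ) = m + 1) := adj_legVert_legVert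

theorem proper_iff {c : PalmVert n (fun _ => 3) → α} :
    (∀ u v, (Palm n _).Adj u v → c u ≠ c v) ↔
      ∀ i, c (vert i 0) ≠ c hub ∧ c (vert i 1) ≠ c (vert i 0) ∧ c (vert i 1) ≠ c (vert i 2) := by
  constructor
  · exact fun hc i => ⟨(hc _ _ (adj_hub_vert.2 rfl)).symm,
      (hc _ _ (adj_vert_vert.2 ⟨rfl, .inl rfl⟩)).symm, hc _ _ (adj_vert_vert.2 ⟨rfl, .inl rfl⟩)⟩
  · intro hc u v
    cases u using vertThreeCases <;> cases v using vertThreeCases <;>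
      simp only [adj_hub_vert, adj_vert_vert, (Palm n _).adj_comm _ hub, SimpleGraph.irrefl] <;>
      grind

section ColorsWithin

theorem mem_colorsWithin_vert {c : PalmVert n (fun _ => 3) → α} {i : Fin n} {j : Fin 3} {r : ℕ}
    {s : α} :
    s ∈ colorsWithin (Palm n _) c (vert i j) r ↔
      (∃ m, s = c (vert i m) ∧ (j - m : ℤ).natAbs ≤ r) ∨
        (j : ℕ) + 1 ≤ r ∧ s ∈ colorsWithin (Palm n _) c hub (r - (j + 1)) :=
  mem_colorsWithin_legVert

variable (c : PalmVert n (fun _ => 3) → α) (i : Fin n)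

theorem colorsWithin_hub_one :
    colorsWithin (Palm n _) c hub 1 = insert (c hub) (Set.range fun i => c (vert i 0)) := by
  have val_add_one_le (j : Fin 3) : (j : ℕ) + 1 ≤ 1 ↔ j = 0 := by omega
  ext s
  refine mem_colorsWithin_hub.trans (or_congr_right (exists_congr fun i => ?_))
  exact ⟨fun ⟨j, hs, hj⟩ => (val_add_one_le j).1 hj ▸ hs.symm, fun hs => ⟨0, hs.symm, le_rfl⟩⟩

theorem colorsWithin_hub_one_subset (r : ℕ) :
    colorsWithin (Palm n _) c hub 1 ⊆ colorsWithin (Palm n _) c hub (r + 1) :=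
  Set.image_mono fun _ hv => le_trans hv (Nat.le_add_left 1 r)

theorem colorsWithin_first_one :
    colorsWithin (Palm n _) c (vert i 0) 1 = {c (vert i 0), c (vert i 1), c hub} := by
  ext s
  simp [mem_colorsWithin_vert, Fin.exists_fin_succ, colorsWithin_zero connected, or_assoc]

theorem colorsWithin_first_add_two (r : ℕ) :
    colorsWithin (Palm n _) c (vert i 0) (r + 2) =
      insert (c (vert i 1)) (insert (c (vert i 2)) (colorsWithin (Palm n _) c hub (r + 1))) := by
  have first_mem : c (vert i 0) ∈ colorsWithin (Palm n _) c hub (r + 1) :=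
    colorsWithin_hub_one_subset c r <| by simp [colorsWithin_hub_one]
  have mem_iff (s : α) : s ∈ colorsWithin (Palm n _) c (vert i 0) (r + 2) ↔
      (s = c (vert i 0) ∨ s = c (vert i 1) ∨ s = c (vert i 2)) ∨
        s ∈ colorsWithin (Palm n _) c hub (r + 1) := by
    simp [mem_colorsWithin_vert, Fin.exists_fin_succ]
  ext s
  grind

theorem colorsWithin_second_one :
    colorsWithin (Palm n _) c (vert i 1) 1 = {c (vert i 0), c (vert i 1), c (vert i 2)} := by
  ext s
  simp [mem_colorsWithin_vert, Fin.exists_fin_succ]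

theorem colorsWithin_second_two :
    colorsWithin (Palm n _) c (vert i 1) 2 =
      {c (vert i 0), c (vert i 1), c (vert i 2), c hub} := by
  ext s
  simp [mem_colorsWithin_vert, Fin.exists_fin_succ, colorsWithin_zero connected, or_assoc]

theorem colorsWithin_third_one :
    colorsWithin (Palm n _) c (vert i 2) 1 = {c (vert i 1), c (vert i 2)} := by
  ext s
  simp [mem_colorsWithin_vert, Fin.exists_fin_succ]

theorem colorsWithin_third_two :
    colorsWithin (Palm n _) c (vert i 2) 2 = {c (vert i 0), c (vert i 1), c (vert i 2)} := by
  ext s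
  simp [mem_colorsWithin_vert, Fin.exists_fin_succ]

end ColorsWithin

/-- A proper coloring of `S_n(3)` whose legs are pairwise different canonical legs, and which has
at least two colors on first leg vertices. -/
structure IsCanonicalColoring (c : PalmVert n (fun _ => 3) → α) : Prop where
  first_ne_hub (i : Fin n) : c (vert i 0) ≠ c hub
  second_ne_first (i : Fin n) : c (vert i 1) ≠ c (vert i 0)
  second_ne_third (i : Fin n) : c (vert i 1) ≠ c (vert i 2)
  third_eq_first_or_notMem (i : Fin n) : c (vert i 2) = c (vert i 0) ∨
    c (vert i 2) ∉ insert (c hub) (Set.range fun l => c (vert l 0))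
  exists_first_ne_first (i : Fin n) : ∃ l, c (vert l 0) ≠ c (vert i 0)
  eq_of_leg_eq {i l : Fin n} : c (vert i 0) = c (vert l 0) → c (vert i 1) = c (vert l 1) →
    c (vert i 2) = c (vert l 2) → i = l

namespace IsCanonicalColoring

variable {c : PalmVert n (fun _ => 3) → α} {i l : Fin n}

theorem third_ne_hub (hc : IsCanonicalColoring c) (i : Fin n) : c (vert i 2) ≠ c hub := by
  rcases hc.third_eq_first_or_notMem i with third_eq_first | third_notMem
  · exact third_eq_first ▸ hc.first_ne_hub i
  · exact fun third_eq_hub => third_notMem (.inl third_eq_hub)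

theorem third_eq_first_of_mem_range (hc : IsCanonicalColoring c)
    (h : c (vert i 2) ∈ Set.range fun l => c (vert l 0)) : c (vert i 2) = c (vert i 0) :=
  (hc.third_eq_first_or_notMem i).resolve_right (not_not_intro (Set.mem_insert_of_mem _ h))

theorem colorsWithin_hub_ne_vert (hc : IsCanonicalColoring c) (i : Fin n) (j : Fin 3) :
    colorsWithin (Palm n _) c hub ≠ colorsWithin (Palm n _) c (vert i j) := by
  intro h
  have color_eq := color_eq_of_colorsWithin_eq connected h
  match j with
  | 0 => exact hc.first_ne_hub i color_eq.symm
  | 2 => exact hc.third_ne_hub i color_eq.symm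
  | 1 =>
    obtain ⟨l, hl⟩ := hc.exists_first_ne_first i
    have first_mem : c (vert l 0) ∈ ({c (vert i 0), c (vert i 1), c (vert i 2)} : Set α) := by
      rw [← colorsWithin_second_one, ← h, colorsWithin_hub_one]
      exact .inr ⟨l, rfl⟩
    rcases first_mem with first_eq | first_eq | first_eq
    · exact hl first_eq
    · exact hc.first_ne_hub l (first_eq.trans color_eq.symm)
    · exact hl (first_eq.trans (hc.third_eq_first_of_mem_range ⟨l, first_eq⟩))

theorem colorsWithin_first_ne_second (hc : IsCanonicalColoring c) (i l : Fin n) :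
    colorsWithin (Palm n _) c (vert i 0) ≠ colorsWithin (Palm n _) c (vert l 1) := by
  intro h
  have color_eq := color_eq_of_colorsWithin_eq connected h
  have hub_mem : c hub ∈ ({c (vert l 0), c (vert l 1), c (vert l 2)} : Set α) := by
    rw [← colorsWithin_second_one, ← h, colorsWithin_first_one]
    exact .inr (.inr rfl)
  rcases hub_mem with hub_eq | hub_eq | hub_eq
  · exact hc.first_ne_hub l hub_eq.symm
  · exact hc.first_ne_hub i (color_eq.trans hub_eq.symm)
  · exact hc.third_ne_hub l hub_eq.symm

theorem colorsWithin_first_ne_third (hc : IsCanonicalColoring c) (i l : Fin n) :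
    colorsWithin (Palm n _) c (vert i 0) ≠ colorsWithin (Palm n _) c (vert l 2) := by
  intro h
  have color_eq := color_eq_of_colorsWithin_eq connected h
  have hub_mem : c hub ∈ ({c (vert l 1), c (vert l 2)} : Set α) := by
    rw [← colorsWithin_third_one, ← h, colorsWithin_first_one]
    exact .inr (.inr rfl)
  have hub_eq_second : c hub = c (vert l 1) := hub_mem.resolve_right (hc.third_ne_hub l).symm
  obtain ⟨m, hm⟩ := hc.exists_first_ne_first l
  have first_mem : c (vert m 0) ∈ ({c (vert l 0), c (vert l 1), c (vert l 2)} : Set α) := by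
    rw [← colorsWithin_third_two, ← h, colorsWithin_first_add_two, colorsWithin_hub_one]
    exact .inr (.inr (.inr ⟨m, rfl⟩))
  rcases first_mem with first_eq | first_eq | first_eq
  · exact hm first_eq
  · exact hc.first_ne_hub m (first_eq.trans hub_eq_second.symm)
  · exact hm (first_eq.trans (hc.third_eq_first_of_mem_range ⟨i, color_eq⟩))

theorem colorsWithin_second_ne_third (hc : IsCanonicalColoring c) (i l : Fin n) :
    colorsWithin (Palm n _) c (vert i 1) ≠ colorsWithin (Palm n _) c (vert l 2) := by
  intro h
  have color_eq := color_eq_of_colorsWithin_eq connected h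
  have hub_mem : c hub ∈ ({c (vert l 0), c (vert l 1), c (vert l 2)} : Set α) := by
    rw [← colorsWithin_third_two, ← h, colorsWithin_second_two]
    exact .inr (.inr (.inr rfl))
  have hub_eq_second : c hub = c (vert l 1) :=
    (hub_mem.resolve_left (hc.first_ne_hub l).symm).resolve_right (hc.third_ne_hub l).symm
  have second_mem : c (vert l 1) ∈ ({c (vert i 0), c (vert i 1), c (vert i 2)} : Set α) := by
    rw [← colorsWithin_second_one, h, colorsWithin_third_one]
    exact .inl rfl
  rw [← hub_eq_second] at second_mem
  rcases second_mem with hub_eq | hub_eq | hub_eq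
  · exact hc.first_ne_hub i hub_eq.symm
  · exact hc.third_ne_hub l (hub_eq.trans color_eq).symm
  · exact hc.third_ne_hub i hub_eq.symm

theorem eq_of_colorsWithin_first_eq (hc : IsCanonicalColoring c)
    (h : colorsWithin (Palm n _) c (vert i 0) = colorsWithin (Palm n _) c (vert l 0)) : i = l := by
  have first_eq := color_eq_of_colorsWithin_eq connected h
  have second_eq : c (vert i 1) = c (vert l 1) := by
    have second_mem : c (vert i 1) ∈ ({c (vert l 0), c (vert l 1), c hub} : Set α) := by
      rw [← colorsWithin_first_one, ← h, colorsWithin_first_one]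
      exact .inr (.inl rfl)
    have second_mem' : c (vert l 1) ∈ ({c (vert i 0), c (vert i 1), c hub} : Set α) := by
      rw [← colorsWithin_first_one, h, colorsWithin_first_one]
      exact .inr (.inl rfl)
    have := hc.second_ne_first i
    have := hc.second_ne_first l
    grind
  refine hc.eq_of_leg_eq first_eq second_eq ?_
  have within_two := congrFun h 2
  rw [colorsWithin_first_add_two, colorsWithin_first_add_two, colorsWithin_hub_one] at within_two
  have := hc.second_ne_third i
  have := hc.second_ne_third l
  have := hc.third_eq_first_or_notMem i
  have := hc.third_eq_first_or_notMem l
  grind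

theorem eq_of_colorsWithin_second_eq (hc : IsCanonicalColoring c)
    (h : colorsWithin (Palm n _) c (vert i 1) = colorsWithin (Palm n _) c (vert l 1)) : i = l := by
  have second_eq := color_eq_of_colorsWithin_eq connected h
  have pair_eq : ({c (vert i 0), c (vert i 2)} : Set α) = {c (vert l 0), c (vert l 2)} := by
    have within_one := congrFun h 1
    rw [colorsWithin_second_one, colorsWithin_second_one] at within_one
    have := hc.second_ne_first i
    have := hc.second_ne_first l
    have := hc.second_ne_third i
    have := hc.second_ne_third l
    grind
  rcases Set.pair_eq_pair_iff.1 pair_eq with ⟨first_eq, third_eq⟩ | ⟨first_eq, third_eq⟩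
  · exact hc.eq_of_leg_eq first_eq second_eq third_eq
  · have third_eq_first := hc.third_eq_first_of_mem_range ⟨l, third_eq.symm⟩
    exact hc.eq_of_leg_eq (third_eq_first.symm.trans third_eq) second_eq
      (third_eq_first.trans first_eq)

theorem eq_of_colorsWithin_third_eq (hc : IsCanonicalColoring c)
    (h : colorsWithin (Palm n _) c (vert i 2) = colorsWithin (Palm n _) c (vert l 2)) : i = l := by
  have third_eq := color_eq_of_colorsWithin_eq connected h
  have second_eq : c (vert i 1) = c (vert l 1) := by
    have within_one := congrFun h 1
    rw [colorsWithin_third_one, colorsWithin_third_one, ← third_eq] at within_one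
    exact (Set.insert_inj (Set.notMem_singleton_iff.2 (hc.second_ne_third i))).1 within_one
  refine hc.eq_of_leg_eq ?_ second_eq third_eq
  have within_two := congrFun h 2
  rw [colorsWithin_third_two, colorsWithin_third_two, ← second_eq, ← third_eq] at within_two
  by_cases first_eq_third : c (vert i 0) = c (vert i 2)
  · exact (first_eq_third.trans third_eq).trans
      (hc.third_eq_first_of_mem_range ⟨i, first_eq_third.trans third_eq⟩)
  · refine (Set.insert_inj ?_).1 within_two
    rintro (first_eq_second | first_eq_third')
    exacts [hc.second_ne_first i first_eq_second.symm, first_eq_third first_eq_third']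

theorem injective_colorsWithin (hc : IsCanonicalColoring c) :
    Function.Injective (colorsWithin (Palm n _) c) := by
  intro u v h
  cases u using vertThreeCases with
  | hub =>
    cases v using vertThreeCases with
    | hub => rfl
    | first l | second l | third l => exact absurd h (hc.colorsWithin_hub_ne_vert _ _)
  | first i =>
    cases v using vertThreeCases with
    | hub => exact absurd h.symm (hc.colorsWithin_hub_ne_vert _ _)
    | first l => rw [hc.eq_of_colorsWithin_first_eq h]
    | second l => exact absurd h (hc.colorsWithin_first_ne_second _ _)
    | third l => exact absurd h (hc.colorsWithin_first_ne_third _ _)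
  | second i =>
    cases v using vertThreeCases with
    | hub => exact absurd h.symm (hc.colorsWithin_hub_ne_vert _ _)
    | first l => exact absurd h.symm (hc.colorsWithin_first_ne_second _ _)
    | second l => rw [hc.eq_of_colorsWithin_second_eq h]
    | third l => exact absurd h (hc.colorsWithin_second_ne_third _ _)
  | third i =>
    cases v using vertThreeCases with
    | hub => exact absurd h.symm (hc.colorsWithin_hub_ne_vert _ _)
    | first l => exact absurd h.symm (hc.colorsWithin_first_ne_third _ _)
    | second l => exact absurd h.symm (hc.colorsWithin_second_ne_third _ _)
    | third l => rw [hc.eq_of_colorsWithin_third_eq h]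

theorem isLocatingColoring {k : ℕ} {c : PalmVert n (fun _ => 3) → Fin k}
    (hc : IsCanonicalColoring c) : IsLocatingColoring (Palm n _) c :=
  isLocatingColoring_iff_injective_colorsWithin.2
    ⟨proper_iff.2 fun i => ⟨hc.first_ne_hub i, hc.second_ne_first i, hc.second_ne_third i⟩,
      hc.injective_colorsWithin⟩

end IsCanonicalColoring

theorem colorsWithin_first_eq {c : PalmVert n (fun _ => 3) → α} {i l : Fin n}
    (first_eq : c (vert i 0) = c (vert l 0)) (second_eq : c (vert i 1) = c (vert l 1))
    (third_eq : c (vert i 2) = c (vert l 2) ∨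
      c (vert i 2) ∈ colorsWithin (Palm n _) c hub 1 ∧
        c (vert l 2) ∈ colorsWithin (Palm n _) c hub 1) :
    colorsWithin (Palm n _) c (vert i 0) = colorsWithin (Palm n _) c (vert l 0) := by
  funext r
  match r with
  | 0 => rw [colorsWithin_zero connected, colorsWithin_zero connected, first_eq]
  | 1 => rw [colorsWithin_first_one, colorsWithin_first_one, first_eq, second_eq]
  | r + 2 =>
    rw [colorsWithin_first_add_two, colorsWithin_first_add_two, second_eq]
    rcases third_eq with third_eq | ⟨hi, hl⟩
    · rw [third_eq]
    · rw [Set.insert_eq_of_mem (colorsWithin_hub_one_subset c r hi),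
        Set.insert_eq_of_mem (colorsWithin_hub_one_subset c r hl)]

section Reduction

variable [DecidableEq α]

/-- The set of colors of the first leg vertices. -/
def firstColors (c : PalmVert n (fun _ => 3) → α) : Finset α :=
  Finset.univ.image fun i => c (vert i 0)

/-- The colors of the `i`-th leg, read from the hub outwards, with the third color normalized as in
`canonicalLegs`. -/
def reducedLeg (c : PalmVert n (fun _ => 3) → α) (i : Fin n) : α × α × α :=
  (c (vert i 0), c (vert i 1),
    if c (vert i 2) ∈ insert (c hub) (firstColors c) then c (vert i 0) else c (vert i 2))

variable {c : PalmVert n (fun _ => 3) → α}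

theorem mem_insert_firstColors {s : α} :
    s ∈ insert (c hub) (firstColors c) ↔ s ∈ colorsWithin (Palm n _) c hub 1 := by
  simp [firstColors, colorsWithin_hub_one]

theorem first_mem_firstColors (i : Fin n) : c (vert i 0) ∈ firstColors c :=
  Finset.mem_image_of_mem _ (Finset.mem_univ i)

theorem injective_reducedLeg (hc : Function.Injective (colorsWithin (Palm n _) c)) :
    Function.Injective (reducedLeg c) := by
  intro i l h
  obtain ⟨first_eq, second_eq, normalized_eq⟩ : _ ∧ _ ∧ _ := by
    simpa only [reducedLeg, Prod.mk.injEq] using h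
  have third_eq : c (vert i 2) = c (vert l 2) ∨ c (vert i 2) ∈ insert (c hub) (firstColors c) ∧
      c (vert l 2) ∈ insert (c hub) (firstColors c) := by
    have := first_mem_firstColors (c := c)
    grind
  have vert_eq : vert i 0 = vert l 0 := hc <| colorsWithin_first_eq first_eq second_eq <|
    third_eq.imp_right (And.imp mem_insert_firstColors.1 mem_insert_firstColors.1)
  cases vert_eq
  rfl

variable [Fintype α]

theorem reducedLeg_mem_canonicalLegs (hc : ∀ u v, (Palm n _).Adj u v → c u ≠ c v) (i : Fin n) :
    reducedLeg c i ∈ canonicalLegs (c hub) (firstColors c) := by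
  obtain ⟨-, second_ne_first, second_ne_third⟩ := proper_iff.1 hc i
  rw [reducedLeg, mem_canonicalLegs]
  refine ⟨first_mem_firstColors i, second_ne_first, ?_, ?_⟩ <;> split_ifs with third_mem
  exacts [second_ne_first, second_ne_third, .inl rfl, .inr third_mem]

end Reduction

theorem le_palmThreeBound_of_isLocatingColoring (hn : 0 < n) {k : ℕ}
    {c : PalmVert n (fun _ => 3) → Fin k} (hc : IsLocatingColoring (Palm n _) c) :
    n ≤ palmThreeBound k := by
  obtain ⟨proper, injective⟩ := isLocatingColoring_iff_injective_colorsWithin.1 hc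
  have hub_notMem : c hub ∉ firstColors c := by
    simpa [firstColors] using fun i => (proper_iff.1 proper i).1
  have card_lt : (firstColors c).card < k := by
    simpa using Finset.card_lt_univ_of_notMem hub_notMem
  have card_pos : 0 < (firstColors c).card :=
    Finset.card_pos.2 ⟨_, first_mem_firstColors ⟨0, hn⟩⟩
  have card_legs_le : n ≤ (canonicalLegs (c hub) (firstColors c)).card := by
    simpa using Finset.card_le_card_of_injOn (s := Finset.univ) (reducedLeg c)
      (fun i _ => reducedLeg_mem_canonicalLegs proper i) (injective_reducedLeg injective).injOn
  rw [card_canonicalLegs hub_notMem, Fintype.card_fin] at card_legs_le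
  calc (n : ℤ) ≤ legCount k (firstColors c).card := by exact_mod_cast card_legs_le
    _ ≤ palmThreeBound k := legCount_le_palmThreeBound (by omega) card_lt

/-- The coloring of `S_n(3)` with hub color `h` and legs colored, from the hub outwards, by the
triples `leg i`. -/
def coloringOfLegs (h : α) (leg : Fin n → α × α × α) : PalmVert n (fun _ => 3) → α
  | none => h
  | some ⟨i, j⟩ => ![(leg i).1, (leg i).2.1, (leg i).2.2] j

theorem isCanonicalColoring_coloringOfLegs [Fintype α] [DecidableEq α] {h : α} {A : Finset α}
    (hA : h ∉ A) (one_lt_card : 1 < A.card) {leg : Fin n → α × α × α}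
    (leg_mem : ∀ i, leg i ∈ canonicalLegs h A) (leg_injective : Function.Injective leg)
    (exists_leg : ∀ x ∈ A, ∃ i, (leg i).1 = x) :
    IsCanonicalColoring (coloringOfLegs h leg) := by
  have leg_spec (i : Fin n) := mem_canonicalLegs.1 (leg_mem i)
  constructor
  case first_ne_hub => exact fun i (hi : (leg i).1 = h) => hA (hi ▸ (leg_spec i).1)
  case second_ne_first => exact fun i => (leg_spec i).2.1
  case second_ne_third => exact fun i => (leg_spec i).2.2.1
  case third_eq_first_or_notMem =>
    refine fun i => (leg_spec i).2.2.2.imp_right (mt ?_)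
    rintro (third_eq_hub | ⟨l, first_eq_third⟩)
    · exact Finset.mem_insert.2 (.inl third_eq_hub)
    · exact Finset.mem_insert_of_mem (Eq.subst first_eq_third (leg_spec l).1)
  case exists_first_ne_first =>
    intro i
    obtain ⟨x, hx, hne⟩ := A.exists_mem_ne one_lt_card (leg i).1
    obtain ⟨l, rfl⟩ := exists_leg x hx
    exact ⟨l, hne⟩
  case eq_of_leg_eq =>
    exact fun first_eq second_eq third_eq =>
      leg_injective (Prod.ext first_eq (Prod.ext second_eq third_eq))

theorem exists_isCanonicalColoring [Fintype α] [DecidableEq α] {h : α} {A : Finset α}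
    (hA : h ∉ A) (one_lt_card : 1 < A.card) (card_le : A.card ≤ n)
    (le_card_canonicalLegs : n ≤ (canonicalLegs h A).card) :
    ∃ c : PalmVert n (fun _ => 3) → α, IsCanonicalColoring c := by
  have hub_second_mem (x : α) (hx : x ∈ A) : (x, h, x) ∈ canonicalLegs h A :=
    mem_canonicalLegs.2 ⟨hx, by grind⟩
  obtain ⟨S, subset_S, S_subset, card_S⟩ := Finset.exists_subsuperset_card_eq
    (Finset.image_subset_iff.2 hub_second_mem) (Finset.card_image_le.trans card_le)
    le_card_canonicalLegs
  let e := (S.equivFinOfCardEq card_S).symm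
  refine ⟨_, isCanonicalColoring_coloringOfLegs (leg := fun i => e i) hA one_lt_card
    (fun i => S_subset (e i).2) (Subtype.val_injective.comp e.injective) fun x hx => ?_⟩
  obtain ⟨i, hi⟩ := e.surjective ⟨_, subset_S (Finset.mem_image_of_mem _ hx)⟩
  exact ⟨i, by rw [hi]⟩

theorem exists_isLocatingColoring_of_le_palmThreeBound (hn : 2 ≤ n) {k : ℕ}
    (hk : n ≤ palmThreeBound k) :
    ∃ c : PalmVert n (fun _ => 3) → Fin k, IsLocatingColoring (Palm n _) c := by
  have two_lt : 2 < k := by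
    by_contra! hk₂
    have : palmThreeBound k ≤ palmThreeBound 2 := palmThreeBound_mono hk₂
    have : palmThreeBound 2 = 1 := by decide
    omega
  have : NeZero k := ⟨by omega⟩
  obtain ⟨A, A_subset, card_A⟩ := Finset.exists_subset_card_eq
    (s := (Finset.univ : Finset (Fin k)).erase 0) (n := min n ((k + 1) / 2)) (by simp; omega)
  have zero_notMem : (0 : Fin k) ∉ A := fun h => Finset.notMem_erase _ _ (A_subset h)
  obtain ⟨c, hc⟩ := exists_isCanonicalColoring (n := n) zero_notMem (by omega) (by omega) <| by
    rw [card_canonicalLegs zero_notMem, Fintype.card_fin, card_A]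
    rcases min_choice n ((k + 1) / 2) with h | h <;> rw [h]
    · exact Nat.le_add_left n _
    · rwa [palmThreeBound_eq_legCount two_lt.le, Nat.cast_le] at hk
  exact ⟨c, hc.isLocatingColoring⟩

theorem exists_isLocatingColoring_iff (hn : 2 ≤ n) (k : ℕ) :
    (∃ c : PalmVert n (fun _ => 3) → Fin k, IsLocatingColoring (Palm n _) c) ↔
      n ≤ palmThreeBound k :=
  ⟨fun ⟨_, hc⟩ => le_palmThreeBound_of_isLocatingColoring (by omega) hc,
    exists_isLocatingColoring_of_le_palmThreeBound hn⟩

end LegsOfLengthThree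

end Palm

/-- For every `n ≥ 2` and every integer `p ≥ 3`:
`χ_L(S_n(3)) = p` if and only if `f(p-1) < n ≤ f(p)`, where
`f(p) = (p-1)·⌊p²/4⌋ - ⌊(p²-2p)/4⌋`. -/
theorem locatingChromaticNumber_regularPalm_three (n : ℕ) (hn : 2 ≤ n)
    (p : ℕ) (hp : 3 ≤ p) :
    locatingChromaticNumber (Palm n (fun _ => 3)) = p ↔
      palmThreeBound (p - 1) < (n : ℤ) ∧ (n : ℤ) ≤ palmThreeBound p := by
  obtain ⟨q, rfl⟩ : ∃ q, p = q + 1 := ⟨p - 1, by omega⟩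
  have exists_iff : {k : ℕ | ∃ c : PalmVert n (fun _ => 3) → Fin k, IsLocatingColoring _ c} =
      {k : ℕ | (n : ℤ) ≤ palmThreeBound k} := Set.ext (Palm.exists_isLocatingColoring_iff hn)
  have upward_closed : ∀ k₁ k₂ : ℕ, k₁ ≤ k₂ → k₁ ∈ {k : ℕ | (n : ℤ) ≤ palmThreeBound k} →
      k₂ ∈ {k : ℕ | (n : ℤ) ≤ palmThreeBound k} :=
    fun _ _ hk hk₁ => le_trans hk₁ (palmThreeBound_mono hk)
  rw [locatingChromaticNumber, exists_iff, Nat.sInf_upward_closed_eq_succ_iff upward_closed,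
    Set.mem_ofPred_eq, Set.mem_ofPred_eq, not_le, and_comm, Nat.add_sub_cancel]
end
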